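/- arXiv:math/0605767 — 7 statements merged into one kernel-verified Lean document; each statement's English description precedes it below -/
import Mathlib

section
/- Let x be a nonzero vector in ℝⁿ and let C be an n×n real symmetric positive definite matrix with spectral condition number κ(C). Then sin ∠(x, Cx) ≤ (κ(C) − 1)/(κ(C) + 1). (In particular Cx ≠ 0, ⟨x, Cx⟩ > 0, and the angle is acute.) -/
/-!
Let `m` and `M` be the extreme eigenvalues of `C`. The symmetric operator `C - (m + M) / 2` has
norm at most `(M - m) / 2`, so `C x` lies in the ball of radius `(M - m) / 2 * ‖x‖` around
`((m + M) / 2) • x`. The line through `C x` meets that ball, and by the law of sines a line at angle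
`θ` to a vector `v` has distance at least `sin θ * ‖v‖` from `v`. With `v = ((m + M) / 2) • x` this
gives `sin θ ≤ (M - m) / (M + m)`.
-/

open Matrix

/-- The Euclidean norm of a vector in `ℝⁿ`. -/
noncomputable def vnorm {n : ℕ} (x : Fin n → ℝ) : ℝ := Real.sqrt (x ⬝ᵥ x)

/-- The angle `∠(x,y) = arccos(⟨x,y⟩/(‖x‖‖y‖)) ∈ [0,π]` between vectors in `ℝⁿ`. -/
noncomputable def vangle {n : ℕ} (x y : Fin n → ℝ) : ℝ :=
  Real.arccos ((x ⬝ᵥ y) / (vnorm x * vnorm y))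

/-- The spectral condition number `κ(C) = λmax(C)/λmin(C)` of a symmetric matrix. -/
noncomputable def condNum {n : ℕ} {C : Matrix (Fin n) (Fin n) ℝ} (hC : C.IsHermitian) : ℝ :=
  (⨆ i, hC.eigenvalues i) / (⨅ i, hC.eigenvalues i)

open InnerProductGeometry WithLp
open scoped InnerProductSpace

section LoewnerBounds

open ContinuousLinearMap

variable {𝕜 E : Type*} [RCLike 𝕜] [NormedAddCommGroup E] [InnerProductSpace 𝕜 E]
  {S T : E →L[𝕜] E}

theorem opNorm_le_of_abs_re_inner_apply_self_le (hT : T.IsSymmetric) {r : ℝ} (hr : 0 ≤ r)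
    (h : ∀ x, |RCLike.re ⟪T x, x⟫_𝕜| ≤ r * ‖x‖ ^ 2) : ‖T‖ ≤ r := by
  rw [norm_eq_iSup_rayleighQuotient T hT]
  refine Real.iSup_le (fun x ↦ ?_) hr
  rw [rayleighQuotient, reApplyInnerSelf_apply, abs_div, abs_sq]
  exact div_le_of_le_mul₀ (sq_nonneg _) hr (h x)

theorem re_inner_apply_self_le_of_le (h : S ≤ T) (x : E) :
    RCLike.re ⟪S x, x⟫_𝕜 ≤ RCLike.re ⟪T x, x⟫_𝕜 := by
  simpa [inner_sub_left] using h.re_inner_nonneg_left x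

theorem re_inner_smul_one_apply_self (c : ℝ) (x : E) :
    RCLike.re ⟪((c : 𝕜) • (1 : E →L[𝕜] E)) x, x⟫_𝕜 = c * ‖x‖ ^ 2 := by
  rw [_root_.smul_apply, one_apply_eq_self, inner_smul_left, RCLike.conj_ofReal,
    RCLike.re_ofReal_mul, inner_self_eq_norm_sq]

variable {m M : ℝ}

theorem mul_norm_sq_le_re_inner_of_smul_one_le (h : (m : 𝕜) • 1 ≤ T) (x : E) :
    m * ‖x‖ ^ 2 ≤ RCLike.re ⟪T x, x⟫_𝕜 :=
  re_inner_smul_one_apply_self (𝕜 := 𝕜) m x ▸ re_inner_apply_self_le_of_le h x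

theorem re_inner_le_mul_norm_sq_of_le_smul_one (h : T ≤ (M : 𝕜) • 1) (x : E) :
    RCLike.re ⟪T x, x⟫_𝕜 ≤ M * ‖x‖ ^ 2 :=
  re_inner_smul_one_apply_self (𝕜 := 𝕜) M x ▸ re_inner_apply_self_le_of_le h x

theorem opNorm_sub_midpoint_smul_one_le (hmT : (m : 𝕜) • 1 ≤ T) (hTM : T ≤ (M : 𝕜) • 1)
    (hmM : m ≤ M) : ‖T - (((m + M) / 2 : ℝ) : 𝕜) • 1‖ ≤ (M - m) / 2 := by
  have h_scalar (c : ℝ) : LinearMap.IsSymmetric ((c : 𝕜) • (1 : E →ₗ[𝕜] E)) :=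
    LinearMap.IsSymmetric.id.smul (RCLike.conj_ofReal c)
  have hT : T.IsSymmetric := by simpa using hmT.isSymmetric.add (h_scalar m)
  refine opNorm_le_of_abs_re_inner_apply_self_le (hT.sub (h_scalar _)) (by linarith) fun x ↦ ?_
  rw [_root_.sub_apply, inner_sub_left, map_sub, re_inner_smul_one_apply_self, abs_le]
  constructor <;>
    linarith [mul_norm_sq_le_re_inner_of_smul_one_le hmT x,
      re_inner_le_mul_norm_sq_of_le_smul_one hTM x]

end LoewnerBounds

section Eigenvalues

open scoped MatrixOrder ComplexOrder

variable {ι 𝕜 : Type*} [Fintype ι] [DecidableEq ι] [RCLike 𝕜] {A B : Matrix ι ι 𝕜}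

theorem algebraMap_iInf_eigenvalues_le (hA : A.IsHermitian) :
    algebraMap ℝ (Matrix ι ι 𝕜) (⨅ i, hA.eigenvalues i) ≤ A := by
  refine algebraMap_le_of_le_spectrum (fun μ hμ ↦ ?_) hA
  rw [hA.spectrum_real_eq_range_eigenvalues] at hμ
  exact csInf_le (Set.finite_range _).bddBelow hμ

theorem le_algebraMap_iSup_eigenvalues (hA : A.IsHermitian) :
    A ≤ algebraMap ℝ (Matrix ι ι 𝕜) (⨆ i, hA.eigenvalues i) := by
  refine le_algebraMap_of_spectrum_le (fun μ hμ ↦ ?_) hA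
  rw [hA.spectrum_real_eq_range_eigenvalues] at hμ
  exact le_csSup (Set.finite_range _).bddAbove hμ

theorem toEuclideanCLM_le_toEuclideanCLM_iff :
    toEuclideanCLM (𝕜 := 𝕜) A ≤ toEuclideanCLM (𝕜 := 𝕜) B ↔ A ≤ B := by
  rw [ContinuousLinearMap.le_def, ← map_sub, ← ContinuousLinearMap.isPositive_toLinearMap_iff,
    coe_toEuclideanCLM_eq_toEuclideanLin, isPositive_toEuclideanLin_iff, Matrix.le_iff]

theorem toEuclideanCLM_algebraMap (r : ℝ) :
    toEuclideanCLM (𝕜 := 𝕜) (algebraMap ℝ (Matrix ι ι 𝕜) r) = (r : 𝕜) • 1 := by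
  rw [IsScalarTower.algebraMap_apply ℝ 𝕜, AlgHomClass.commutes, Algebra.algebraMap_eq_smul_one,
    RCLike.algebraMap_eq_ofReal]

theorem iInf_eigenvalues_smul_one_le_toEuclideanCLM (hA : A.IsHermitian) :
    ((⨅ i, hA.eigenvalues i : ℝ) : 𝕜) • 1 ≤ toEuclideanCLM (𝕜 := 𝕜) A := by
  rw [← toEuclideanCLM_algebraMap, toEuclideanCLM_le_toEuclideanCLM_iff]
  exact algebraMap_iInf_eigenvalues_le hA

theorem toEuclideanCLM_le_iSup_eigenvalues_smul_one (hA : A.IsHermitian) :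
    toEuclideanCLM (𝕜 := 𝕜) A ≤ ((⨆ i, hA.eigenvalues i : ℝ) : 𝕜) • 1 := by
  rw [← toEuclideanCLM_algebraMap, toEuclideanCLM_le_toEuclideanCLM_iff]
  exact le_algebraMap_iSup_eigenvalues hA

theorem iInf_eigenvalues_pos [Nonempty ι] (hA : A.PosDef) :
    0 < ⨅ i, hA.isHermitian.eigenvalues i := by
  obtain ⟨i, hi⟩ := exists_eq_ciInf_of_finite (f := hA.isHermitian.eigenvalues)
  exact hi ▸ hA.eigenvalues_pos i

end Eigenvalues

section Angle

variable {V : Type*} [NormedAddCommGroup V] [InnerProductSpace ℝ V]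

theorem sin_angle_mul_norm_le_norm_sub (x y : V) : Real.sin (angle x y) * ‖x‖ ≤ ‖x - y‖ := by
  rw [sin_angle_mul_norm_eq_sin_angle_mul_norm]
  exact mul_le_of_le_one_left (norm_nonneg _) (Real.sin_le_one _)

theorem sin_angle_le_div_of_norm_sub_smul_le {x y : V} (hx : x ≠ 0) {c r : ℝ} (hc : 0 < c)
    (h : ‖y - c • x‖ ≤ r * ‖x‖) : Real.sin (angle x y) ≤ r / c := by
  rw [le_div_iff₀ hc]
  refine le_of_mul_le_mul_right ?_ (norm_pos_iff.2 hx)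
  calc
    Real.sin (angle x y) * c * ‖x‖ = Real.sin (angle (c • x) y) * ‖c • x‖ := by
      rw [angle_smul_left_of_pos _ _ hc, norm_smul_of_nonneg hc.le, mul_assoc]
    _ ≤ ‖c • x - y‖ := sin_angle_mul_norm_le_norm_sub _ _
    _ = ‖y - c • x‖ := norm_sub_rev _ _
    _ ≤ r * ‖x‖ := h

theorem angle_lt_pi_div_two_of_inner_pos {x y : V} (h : 0 < ⟪x, y⟫_ℝ) :
    angle x y < Real.pi / 2 := by
  have hx : x ≠ 0 := fun hx ↦ by simp [hx] at h
  have hy : y ≠ 0 := fun hy ↦ by simp [hy] at h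
  exact Real.arccos_lt_pi_div_two.2 (div_pos h (by positivity))

theorem vangle_eq_angle {n : ℕ} (x y : Fin n → ℝ) :
    vangle x y = angle (toLp 2 x : EuclideanSpace ℝ (Fin n)) (toLp 2 y) := by
  simp only [vangle, vnorm, angle, norm_eq_sqrt_real_inner, EuclideanSpace.inner_toLp_toLp,
    star_trivial, dotProduct_comm]

theorem sin_angle_le_of_posDef_general {T : V →L[ℝ] V} {m M : ℝ} (hm : 0 < m)
    (hmT : m • 1 ≤ T) (hTM : T ≤ M • 1) {x : V} (hx : x ≠ 0) :
    T x ≠ 0 ∧ 0 < ⟪x, T x⟫_ℝ ∧ angle x (T x) < Real.pi / 2 ∧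
      Real.sin (angle x (T x)) ≤ (M / m - 1) / (M / m + 1) := by
  have hlower : m * ‖x‖ ^ 2 ≤ ⟪T x, x⟫_ℝ := mul_norm_sq_le_re_inner_of_smul_one_le hmT x
  have hupper : ⟪T x, x⟫_ℝ ≤ M * ‖x‖ ^ 2 := re_inner_le_mul_norm_sq_of_le_smul_one hTM x
  have hmM : m ≤ M := le_of_mul_le_mul_right (hlower.trans hupper) (by positivity)
  have hpos : 0 < ⟪x, T x⟫_ℝ := by
    rw [real_inner_comm]
    exact hlower.trans_lt' (by positivity)
  have hTx : T x ≠ 0 := fun h ↦ by simp [h] at hpos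
  have hball : ‖T x - ((m + M) / 2) • x‖ ≤ (M - m) / 2 * ‖x‖ :=
    (T - ((m + M) / 2) • 1).le_of_opNorm_le (opNorm_sub_midpoint_smul_one_le hmT hTM hmM) x
  refine ⟨hTx, hpos, angle_lt_pi_div_two_of_inner_pos hpos, ?_⟩
  calc
    Real.sin (angle x (T x)) ≤ (M - m) / 2 / ((m + M) / 2) :=
      sin_angle_le_div_of_norm_sub_smul_le hx (by linarith) hball
    _ = (M / m - 1) / (M / m + 1) := by field_simp; ring

end Angle

/-- If `x ≠ 0` and `C` is a real symmetric positive definite matrix with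
spectral condition number `κ(C)`, then `Cx ≠ 0`, `⟨x, Cx⟩ > 0`, the angle `∠(x, Cx)` is acute,
and `sin ∠(x, Cx) ≤ (κ(C) − 1)/(κ(C) + 1)`. -/
theorem sin_angle_le_of_posDef {n : ℕ} (x : Fin n → ℝ) (hx : x ≠ 0)
    (C : Matrix (Fin n) (Fin n) ℝ) (hC : C.PosDef) :
    C *ᵥ x ≠ 0 ∧ 0 < x ⬝ᵥ (C *ᵥ x) ∧ vangle x (C *ᵥ x) < Real.pi / 2 ∧
      Real.sin (vangle x (C *ᵥ x)) ≤
        (condNum hC.isHermitian - 1) / (condNum hC.isHermitian + 1) := by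
  obtain ⟨i, -⟩ := Function.ne_iff.1 hx
  have : Nonempty (Fin n) := ⟨i⟩
  simpa [vangle_eq_angle, condNum, EuclideanSpace.inner_toLp_toLp, dotProduct_comm x] using
    sin_angle_le_of_posDef_general (iInf_eigenvalues_pos hC)
      (iInf_eigenvalues_smul_one_le_toEuclideanCLM hC.isHermitian)
      (toEuclideanCLM_le_iSup_eigenvalues_smul_one hC.isHermitian) ((toLp_eq_zero 2).not.2 hx)
end

section
/- In the preconditioned method with variable preconditioning, suppose x_l ≠ x* for all l ≤ k. Then the direction vectors p₀, …, p_k are all nonzero (so the method is well-defined through step k), the directions satisfy ⟨p_i, p_j⟩_A = 0 for all k − m_k ≤ i < j ≤ k, and the next error satisfies ⟨e_{k+1}, s_k⟩_A = 0 and ⟨e_{k+1}, p_i⟩_A = 0 for all k − m_k ≤ i ≤ k. -/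
open Matrix

/-!
Since `A e k = r k`, the residual pairing `⟨r k, v⟩` is the energy pairing `⟨e k, v⟩_A`. The method
therefore combines two processes in one geometry: a Gram–Schmidt process which orthogonalizes `s k`
only against a window of previous directions, and exact line searches for the error. Because the
left end of the window never moves backwards, the directions in a window are orthogonal to each
other, and so each line search preserves the orthogonality achieved by the previous ones. Finally,
a vector orthogonal to the window pairs equally with `s k` and `p k`. For `e k` this gives
`⟨e k, p k⟩_A = ⟨r k, (B k)⁻¹ r k⟩ > 0`, so that `p k ≠ 0`; for `e (k + 1)` it turns orthogonality
to `p k` into orthogonality to `s k`.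
-/

section SesquilinearForm

variable {K V : Type*} [Field K] [AddCommGroup V] [Module K V] {σ : K →+* K}
  {β : V →ₗ[K] V →ₛₗ[σ] K}

theorem form_sub_div_smul_eq_zero (hβ : ∀ v, β v v = 0 → v = 0) (u v : V) :
    β (u - (β u v / β v v) • v) v = 0 := by
  have hcancel : β u v / β v v * β v v = β u v :=
    div_mul_cancel_of_imp fun h => by rw [hβ v h, map_zero]
  rw [map_sub, map_smul, LinearMap.sub_apply, LinearMap.smul_apply, smul_eq_mul, hcancel, sub_self]

theorem form_sub_sum_div_smul_eq_zero {ι : Type*} (hβ : ∀ v, β v v = 0 → v = 0) {t : Finset ι}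
    {p : ι → V} (hp : (t : Set ι).Pairwise fun i j => β (p i) (p j) = 0) (u : V) {i : ι}
    (hi : i ∈ t) : β (u - ∑ l ∈ t, (β u (p l) / β (p l) (p l)) • p l) (p i) = 0 := by
  have hsum : β (∑ l ∈ t, (β u (p l) / β (p l) (p l)) • p l) (p i) =
      β ((β u (p i) / β (p i) (p i)) • p i) (p i) := by
    rw [map_sum, LinearMap.sum_apply]
    refine Finset.sum_eq_single_of_mem i hi fun l hl hli => ?_
    rw [map_smul, LinearMap.smul_apply, hp hl hi hli, smul_zero]
  rw [map_sub, LinearMap.sub_apply, hsum, ← LinearMap.sub_apply, ← map_sub,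
    form_sub_div_smul_eq_zero hβ]

/-- Truncated Gram–Schmidt: `p k` arises from `s k` by removing its components along the directions
`p l` with `start k ≤ l < k`. The method with `m k` previous directions has `start k = k - m k`.
By `x / 0 = 0`, a vanishing direction in the window contributes nothing. -/
def IsWindowedGramSchmidt (β : V →ₗ[K] V →ₛₗ[σ] K) (start : ℕ → ℕ) (s p : ℕ → V) : Prop :=
  ∀ k, p k = s k - ∑ l ∈ Finset.Ico (start k) k, (β (s k) (p l) / β (p l) (p l)) • p l

/-- Exact line searches along the directions `p k`, expressed through the errors `e k` of the
iterates: the new error is the old one minus its component along `p k`. -/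
def IsExactLineSearch (β : V →ₗ[K] V →ₛₗ[σ] K) (p e : ℕ → V) : Prop :=
  ∀ k, e (k + 1) = e k - (β (e k) (p k) / β (p k) (p k)) • p k

variable {start : ℕ → ℕ} {s p e : ℕ → V}

theorem IsWindowedGramSchmidt.pairwise_insert (hp : IsWindowedGramSchmidt β start s p)
    (hrefl : β.IsRefl) (hβ : ∀ v, β v v = 0 → v = 0) {k : ℕ}
    (hwindow : (Set.Ico (start k) k).Pairwise fun i j => β (p i) (p j) = 0) :
    (insert k (Set.Ico (start k) k)).Pairwise fun i j => β (p i) (p j) = 0 := by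
  refine hwindow.insert fun i hi _ => ?_
  have hki : β (p k) (p i) = 0 := by
    rw [hp k]
    exact form_sub_sum_div_smul_eq_zero hβ (by rwa [Finset.coe_Ico]) (s k) (Finset.mem_Ico.2 hi)
  exact ⟨hki, hrefl _ _ hki⟩

theorem IsWindowedGramSchmidt.pairwise_orthogonal (hp : IsWindowedGramSchmidt β start s p)
    (hrefl : β.IsRefl) (hβ : ∀ v, β v v = 0 → v = 0) (hstart : Monotone start) (k : ℕ) :
    (Set.Ico (start k) (k + 1)).Pairwise fun i j => β (p i) (p j) = 0 := by
  have hsubset : ∀ k, Set.Ico (start k) (k + 1) ⊆ insert k (Set.Ico (start k) k) := by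
    intro k i hi
    simp only [Set.mem_insert_iff, Set.mem_Ico] at hi ⊢
    lia
  induction k with
  | zero => exact (hp.pairwise_insert hrefl hβ (by simp)).mono (hsubset 0)
  | succ k ih =>
    have hwindow := ih.mono (Set.Ico_subset_Ico_left (hstart k.le_succ))
    exact (hp.pairwise_insert hrefl hβ hwindow).mono (hsubset (k + 1))

theorem IsWindowedGramSchmidt.form_direction_eq (hp : IsWindowedGramSchmidt β start s p) {k : ℕ}
    {v : V} (hv : ∀ i, start k ≤ i → i < k → β v (p i) = 0) : β v (p k) = β v (s k) := by
  have hsum : β v (∑ l ∈ Finset.Ico (start k) k, (β (s k) (p l) / β (p l) (p l)) • p l) = 0 := by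
    rw [map_sum]
    refine Finset.sum_eq_zero fun l hl => ?_
    obtain ⟨hstartl, hlk⟩ := Finset.mem_Ico.1 hl
    rw [map_smulₛₗ, hv l hstartl hlk, smul_zero]
  rw [hp k, map_sub, hsum, sub_zero]

theorem IsExactLineSearch.orthogonal_of_pairwise (he : IsExactLineSearch β p e)
    (hβ : ∀ v, β v v = 0 → v = 0) {a b : ℕ}
    (hp : (Set.Ico a b).Pairwise fun i j => β (p i) (p j) = 0) {i l : ℕ} (hai : a ≤ i)
    (hil : i < l) (hlb : l ≤ b) : β (e l) (p i) = 0 := by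
  induction l, hil using Nat.le_induction with
  | base =>
    rw [he i]
    exact form_sub_div_smul_eq_zero hβ (e i) (p i)
  | succ l hil ih =>
    have hpl : β (p l) (p i) = 0 := hp ⟨by lia, hlb⟩ ⟨hai, by lia⟩ (by lia)
    rw [he l, map_sub, map_smul, LinearMap.sub_apply, LinearMap.smul_apply, ih (by lia), hpl,
      smul_zero, sub_zero]

theorem local_orthogonality_general (hrefl : β.IsRefl) (hβ : ∀ v, β v v = 0 → v = 0)
    (hstart : Monotone start) (hp : IsWindowedGramSchmidt β start s p)
    (he : IsExactLineSearch β p e) (k : ℕ) (hes : ∀ l ≤ k, β (e l) (s l) ≠ 0) :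
    (∀ l ≤ k, p l ≠ 0) ∧
    (∀ i j, start k ≤ i → i < j → j ≤ k → β (p i) (p j) = 0) ∧
    β (e (k + 1)) (s k) = 0 ∧
    (∀ i, start k ≤ i → i ≤ k → β (e (k + 1)) (p i) = 0) := by
  have hpair := hp.pairwise_orthogonal hrefl hβ hstart
  have herr : ∀ {i j l}, start j ≤ i → i < l → l ≤ j + 1 → β (e l) (p i) = 0 := fun {i j l} =>
    he.orthogonal_of_pairwise hβ (hpair j)
  refine ⟨fun l hl hpl => hes l hl ?_, fun i j hi hij hj => ?_, ?_, fun i hi hik => ?_⟩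
  · rw [← hp.form_direction_eq fun i hi hil => herr hi hil l.le_succ, hpl, map_zero]
  · exact hpair k ⟨hi, by lia⟩ ⟨by lia, by lia⟩ hij.ne
  · rw [← hp.form_direction_eq fun i hi hik => herr hi (by lia) le_rfl, he k]
    exact form_sub_div_smul_eq_zero hβ (e k) (p k)
  · exact herr hi (by lia) le_rfl

end SesquilinearForm

section EnergyForm

variable {ι R : Type*} [Fintype ι] [CommRing R] {A : Matrix ι ι R}

/-- The energy form `⟨u, v⟩_A = ⟨A u, v⟩` of a matrix, which is the `A`-inner product when `A` is
symmetric positive definite. -/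
def energyForm (A : Matrix ι ι R) : LinearMap.BilinForm R (ι → R) :=
  dotProductBilin R R ∘ₗ A.mulVecLin

theorem energyForm_apply (A : Matrix ι ι R) (u v : ι → R) :
    energyForm A u v = (A *ᵥ u) ⬝ᵥ v := rfl

theorem energyForm_isSymm (hA : A.IsSymm) : (energyForm A).IsSymm := by
  refine ⟨fun u v => ?_⟩
  simp only [energyForm_apply]
  rw [dotProduct_comm, dotProduct_mulVec, ← mulVec_transpose, hA.eq]

theorem energyForm_anisotropic [PartialOrder R] [StarRing R] [TrivialStar R] (hA : A.PosDef)
    (v : ι → R) (hv : energyForm A v v = 0) : v = 0 := by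
  by_contra hne
  have hpos := hA.dotProduct_mulVec_pos hne
  rw [star_trivial, dotProduct_comm] at hpos
  exact hpos.ne' hv

theorem energyForm_mulVec_mulVec_ne_zero [PartialOrder R] [StarRing R] [TrivialStar R]
    {P : Matrix ι ι R} (hA : A.PosDef) (hP : P.PosDef) {u : ι → R} (hu : u ≠ 0) :
    energyForm A u (P *ᵥ A *ᵥ u) ≠ 0 := by
  have hAu : A *ᵥ u ≠ 0 := fun h =>
    hu (energyForm_anisotropic hA u (by rw [energyForm_apply, h, zero_dotProduct]))
  rw [energyForm_apply, dotProduct_comm]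
  exact mt (energyForm_anisotropic hP (A *ᵥ u)) hAu

end EnergyForm

/-- In the preconditioned method with variable preconditioning, if
`x l ≠ x*` for all `l ≤ k`, then the directions `p 0, …, p k` are nonzero (the method is
well-defined through step `k`), the directions `p i` for `k − m k ≤ i < j ≤ k` are pairwise
`A`-orthogonal, and the next error is `A`-orthogonal to `s k` and to `p i` for
`k − m k ≤ i ≤ k`. -/
theorem local_orthogonality
    {n : ℕ} (A : Matrix (Fin n) (Fin n) ℝ) (hA : A.PosDef)
    (b x0 : Fin n → ℝ)
    (B : ℕ → Matrix (Fin n) (Fin n) ℝ) (hB : ∀ k, (B k).PosDef)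
    (m : ℕ → ℕ) (hm0 : m 0 = 0) (hmle : ∀ k, m k ≤ k) (hmsucc : ∀ k, m (k + 1) ≤ m k + 1)
    (x r s p e : ℕ → Fin n → ℝ)
    (hx0 : x 0 = x0)
    (hr : ∀ k, r k = b - A *ᵥ x k)
    (hs : ∀ k, s k = (B k)⁻¹ *ᵥ r k)
    (hp : ∀ k, p k = s k - ∑ l ∈ Finset.Ico (k - m k) k,
        (((A *ᵥ s k) ⬝ᵥ p l) / ((A *ᵥ p l) ⬝ᵥ p l)) • p l)
    (hxs : ∀ k, x (k + 1) = x k + ((r k ⬝ᵥ p k) / ((A *ᵥ p k) ⬝ᵥ p k)) • p k)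
    (he : ∀ k, e k = A⁻¹ *ᵥ b - x k)
    (k : ℕ) (hexact : ∀ l ≤ k, x l ≠ A⁻¹ *ᵥ b) :
    (∀ l ≤ k, p l ≠ 0) ∧
    (∀ i j, k - m k ≤ i → i < j → j ≤ k → (A *ᵥ p i) ⬝ᵥ p j = 0) ∧
    ((A *ᵥ e (k + 1)) ⬝ᵥ s k = 0) ∧
    (∀ i, k - m k ≤ i → i ≤ k → (A *ᵥ e (k + 1)) ⬝ᵥ p i = 0) := by
  have hdet : IsUnit A.det := (isUnit_iff_isUnit_det A).1 hA.isUnit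
  have hres : ∀ k, A *ᵥ e k = r k := fun k => by
    rw [he, hr, mulVec_sub, mulVec_mulVec, mul_nonsing_inv A hdet, one_mulVec]
  have hsearch : IsExactLineSearch (energyForm A) p e := fun k => by
    rw [he, hxs, ← sub_sub, ← he, energyForm_apply, energyForm_apply, hres]
  have hpair : ∀ l ≤ k, energyForm A (e l) (s l) ≠ 0 := fun l hl => by
    rw [hs, ← hres]
    exact energyForm_mulVec_mulVec_ne_zero hA (hB l).inv
      (by rw [he]; exact sub_ne_zero.2 (hexact l hl).symm)
  have hstart : Monotone fun k => k - m k := monotone_nat_of_le_succ fun k => by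
    have := hmsucc k
    lia
  have hsymm : A.IsSymm := isHermitian_iff_isSymm.1 hA.isHermitian
  exact local_orthogonality_general (energyForm_isSymm hsymm).isRefl (energyForm_anisotropic hA)
    hstart hp hsearch k hpair
end

section
/- In the preconditioned method with variable preconditioning, suppose x_l ≠ x* for all l ≤ k. Then the error e_{k+1} is locally optimal: ‖e_{k+1}‖_A = min over all p in span{s_k, p_{k−m_k}, …, p_{k−1}} of ‖e_k − p‖_A; in particular ‖e_{k+1}‖_A ≤ ‖e_k − p‖_A for every vector p in that span. -/
/-!
In the `A`-inner product, `p k` is `s k` minus its orthogonal projections onto the directions of the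
current window, and the step from `x k` to `x (k + 1)` removes from the error `e k` its orthogonal
projection onto `p k`. As the left end `k - m k` of the window never moves backwards, the directions
within a window are pairwise orthogonal and the error stays orthogonal to each of them. Hence
`e (k + 1)` is orthogonal to `p k` and to the window, that is, to the whole of the span in question,
so the correction `e k - e (k + 1)`, a multiple of `p k`, is the best approximation of `e k` in that
span.
-/

open Matrix

/-- The `A`-norm `‖x‖_A = √⟨A x, x⟩`. -/
noncomputable def anorm {n : ℕ} (A : Matrix (Fin n) (Fin n) ℝ) (x : Fin n → ℝ) : ℝ :=
  Real.sqrt ((A *ᵥ x) ⬝ᵥ x)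

section InnerProductSpace

open Finset Submodule
open scoped InnerProductSpace

variable {𝕜 E : Type*} [RCLike 𝕜] [NormedAddCommGroup E] [InnerProductSpace 𝕜 E]

lemma span_insert_sub_of_mem_span {R M : Type*} [Ring R] [AddCommGroup M] [Module R M]
    {S : Set M} {x y : M} (hy : y ∈ span R S) :
    span R (insert (x - y) S) = span R (insert x S) := by
  have hS (z : M) : y ∈ span R (insert z S) := span_mono (Set.subset_insert z S) hy
  have hmem (z : M) : z ∈ span R (insert z S) := subset_span (Set.mem_insert z S)
  apply le_antisymm <;> refine span_le.2 (Set.insert_subset ?_ ?_)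
  · exact sub_mem (hmem x) (hS x)
  · exact (Set.subset_insert _ _).trans subset_span
  · simpa using add_mem (hmem (x - y)) (hS (x - y))
  · exact (Set.subset_insert _ _).trans subset_span

lemma isLeast_norm_sub_of_mem_orthogonal {K : Submodule 𝕜 E} {u v : E} (hv : v ∈ K)
    (huv : u - v ∈ Kᗮ) : IsLeast {t : ℝ | ∃ q ∈ K, t = ‖u - q‖} ‖u - v‖ := by
  have hmin : ‖u - v‖ = ⨅ q : K, ‖u - q‖ :=
    (K.norm_eq_iInf_iff_inner_eq_zero hv).2 ((K.mem_orthogonal' _).1 huv)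
  have hbdd : BddBelow (Set.range fun q : K => ‖u - q‖) :=
    ⟨0, Set.forall_mem_range.2 fun _ => norm_nonneg _⟩
  refine ⟨⟨v, hv, rfl⟩, ?_⟩
  rintro _ ⟨q, hq, rfl⟩
  exact hmin.trans_le (ciInf_le hbdd ⟨q, hq⟩)

lemma starProjection_span_singleton_eq_inner_div_inner_smul (u v : E) :
    (𝕜 ∙ v).starProjection u = (⟪v, u⟫_𝕜 / ⟪v, v⟫_𝕜) • v := by
  rw [starProjection_singleton, inner_self_eq_norm_sq_to_K, RCLike.ofReal_pow]

lemma inner_sub_starProjection_span_singleton (u v : E) :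
    ⟪v, u - (𝕜 ∙ v).starProjection u⟫_𝕜 = 0 :=
  mem_orthogonal_singleton_iff_inner_right.1 (sub_starProjection_mem_orthogonal u)

lemma inner_starProjection_span_singleton_eq_zero {v w : E} (hwv : ⟪w, v⟫_𝕜 = 0) (u : E) :
    ⟪w, (𝕜 ∙ v).starProjection u⟫_𝕜 = 0 := by
  rw [starProjection_singleton, inner_smul_right, hwv, mul_zero]

lemma inner_sub_sum_starProjection_span_singleton {ι : Type*} {S : Finset ι} {v : ι → E}
    (hv : (S : Set ι).Pairwise fun i j => ⟪v i, v j⟫_𝕜 = 0) {i : ι} (hi : i ∈ S) (u : E) :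
    ⟪v i, u - ∑ j ∈ S, (𝕜 ∙ v j).starProjection u⟫_𝕜 = 0 := by
  have hother : ∀ j ∈ S, j ≠ i → ⟪v i, (𝕜 ∙ v j).starProjection u⟫_𝕜 = 0 := fun j hj hji =>
    inner_starProjection_span_singleton_eq_zero (hv hi hj hji.symm) u
  rw [inner_sub_right, inner_sum, sum_eq_single_of_mem i hi hother, ← inner_sub_right,
    inner_sub_starProjection_span_singleton]

variable (𝕜) in
/-- The directions `p` arise from `s` by Gram–Schmidt orthogonalization truncated to windows: `p k`
is `s k` minus its projections onto the lines spanned by `p l`, `w k ≤ l < k`. Only the left end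
`w k` of each window is recorded (`w k = k - m k` in the preconditioned method), and vectors are not
normalized. -/
def IsTruncatedGramSchmidt (w : ℕ → ℕ) (s p : ℕ → E) : Prop :=
  ∀ k, p k = s k - ∑ l ∈ Ico (w k) k, (𝕜 ∙ p l).starProjection (s k)

namespace IsTruncatedGramSchmidt

variable {w : ℕ → ℕ} {s p e : ℕ → E}

lemma inner_direction_eq_zero (hp : IsTruncatedGramSchmidt 𝕜 w s p) (hw : Monotone w) {k l : ℕ}
    (hl : l ∈ Ico (w k) k) : ⟪p l, p k⟫_𝕜 = 0 := by
  induction k using Nat.strong_induction_on generalizing l with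
  | _ k ih =>
    have hlt : ∀ i ∈ Ico (w k) k, ∀ j ∈ Ico (w k) k, i < j → ⟪p i, p j⟫_𝕜 = 0 := by
      intro i hi j hj hij
      rw [mem_Ico] at hi hj
      exact ih j hj.2 (mem_Ico.2 ⟨(hw hj.2.le).trans hi.1, hij⟩)
    have hwindow : (Ico (w k) k : Set ℕ).Pairwise fun i j => ⟪p i, p j⟫_𝕜 = 0 := by
      intro i hi j hj hij
      rcases lt_or_gt_of_ne hij with h | h
      · exact hlt i hi j hj h
      · exact inner_eq_zero_symm.1 (hlt j hj i hi h)
    rw [hp k]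
    exact inner_sub_sum_starProjection_span_singleton hwindow hl (s k)

lemma span_insert_direction (hp : IsTruncatedGramSchmidt 𝕜 w s p) (k : ℕ) :
    span 𝕜 (insert (p k) (p '' Set.Ico (w k) k)) =
      span 𝕜 (insert (s k) (p '' Set.Ico (w k) k)) := by
  have hproj : ∑ l ∈ Ico (w k) k, (𝕜 ∙ p l).starProjection (s k) ∈
      span 𝕜 (p '' Set.Ico (w k) k) := by
    refine sum_mem fun l hl => ?_
    have hpl : p l ∈ span 𝕜 (p '' Set.Ico (w k) k) :=
      subset_span (Set.mem_image_of_mem p (mem_Ico.1 hl))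
    exact (span_singleton_le_iff_mem _ _).2 hpl (starProjection_apply_mem _ _)
  rw [hp k]
  exact span_insert_sub_of_mem_span hproj

lemma inner_error_succ_eq_zero (hp : IsTruncatedGramSchmidt 𝕜 w s p) (hw : Monotone w)
    (he : ∀ k, e (k + 1) = e k - (𝕜 ∙ p k).starProjection (e k)) {k l : ℕ}
    (hl : l ∈ Ico (w k) k) : ⟪p l, e (k + 1)⟫_𝕜 = 0 := by
  induction k with
  | zero => simp at hl
  | succ k ih =>
    have hprev : ⟪p l, e (k + 1)⟫_𝕜 = 0 := by
      rw [mem_Ico] at hl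
      rcases (Nat.le_of_lt_succ hl.2).eq_or_lt with rfl | hlk
      · rw [he l, inner_sub_starProjection_span_singleton]
      · exact ih (mem_Ico.2 ⟨(hw k.le_succ).trans hl.1, hlk⟩)
    rw [he (k + 1), inner_sub_right, hprev,
      inner_starProjection_span_singleton_eq_zero (hp.inner_direction_eq_zero hw hl), sub_zero]

lemma error_succ_mem_orthogonal (hp : IsTruncatedGramSchmidt 𝕜 w s p) (hw : Monotone w)
    (he : ∀ k, e (k + 1) = e k - (𝕜 ∙ p k).starProjection (e k)) (k : ℕ) :
    e (k + 1) ∈ (span 𝕜 (insert (s k) (p '' Set.Ico (w k) k)))ᗮ := by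
  rw [← hp.span_insert_direction, ← span_singleton_le_iff_mem, ← isOrtho_iff_le, isOrtho_comm,
    isOrtho_span]
  rintro _ (rfl | ⟨l, hl, rfl⟩) _ rfl
  · rw [he k, inner_sub_starProjection_span_singleton]
  · exact hp.inner_error_succ_eq_zero hw he (mem_Ico.2 hl)

end IsTruncatedGramSchmidt

theorem local_optimality_general {w : ℕ → ℕ} {s p e : ℕ → E} (hw : Monotone w)
    (hp : IsTruncatedGramSchmidt 𝕜 w s p)
    (he : ∀ k, e (k + 1) = e k - (𝕜 ∙ p k).starProjection (e k)) (k : ℕ) :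
    IsLeast {t : ℝ | ∃ q ∈ span 𝕜 (insert (s k) (p '' Set.Ico (w k) k)), t = ‖e k - q‖}
      ‖e (k + 1)‖ := by
  have hpk : p k ∈ span 𝕜 (insert (s k) (p '' Set.Ico (w k) k)) :=
    hp.span_insert_direction k ▸ subset_span (Set.mem_insert _ _)
  have hcorr : (𝕜 ∙ p k).starProjection (e k) ∈ span 𝕜 (insert (s k) (p '' Set.Ico (w k) k)) :=
    (span_singleton_le_iff_mem _ _).2 hpk (starProjection_apply_mem _ _)
  have horth := hp.error_succ_mem_orthogonal hw he k
  rw [he k] at horth ⊢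
  exact isLeast_norm_sub_of_mem_orthogonal hcorr horth

end InnerProductSpace

lemma monotone_self_sub_of_succ_le_add_one {m : ℕ → ℕ} (hm : ∀ k, m (k + 1) ≤ m k + 1) :
    Monotone fun k => k - m k :=
  monotone_nat_of_le_succ fun k => by have := hm k; lia

lemma mulVec_inv_mulVec_sub {ι R : Type*} [Fintype ι] [DecidableEq ι] [CommRing R]
    {A : Matrix ι ι R} (hA : IsUnit A) (b x : ι → R) :
    A *ᵥ (A⁻¹ *ᵥ b - x) = b - A *ᵥ x := by
  rw [mulVec_sub, mulVec_mulVec, mul_nonsing_inv _ ((isUnit_iff_isUnit_det A).1 hA), one_mulVec]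

lemma isLeast_anorm_error_succ {n : ℕ} {A : Matrix (Fin n) (Fin n) ℝ} (hA : A.PosDef)
    {w : ℕ → ℕ} (hw : Monotone w) {s p e : ℕ → Fin n → ℝ}
    (hp : ∀ k, p k = s k - ∑ l ∈ Finset.Ico (w k) k,
        (((A *ᵥ s k) ⬝ᵥ p l) / ((A *ᵥ p l) ⬝ᵥ p l)) • p l)
    (he : ∀ k, e (k + 1) = e k - (((A *ᵥ e k) ⬝ᵥ p k) / ((A *ᵥ p k) ⬝ᵥ p k)) • p k) (k : ℕ) :
    IsLeast
      {t : ℝ | ∃ q ∈ Submodule.span ℝ (insert (s k) (p '' Set.Ico (w k) k)),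
        t = anorm A (e k - q)}
      (anorm A (e (k + 1))) := by
  let _ := A.toNormedAddCommGroup hA
  let _ := A.toInnerProductSpace hA.posSemidef
  have hinner (u v : Fin n → ℝ) : inner ℝ u v = (A *ᵥ v) ⬝ᵥ u := rfl
  -- The goal needs no rewriting: `anorm A` is definitionally the norm of this inner product.
  refine local_optimality_general (𝕜 := ℝ) hw (fun j => ?_) (fun j => ?_) k
  · simpa only [starProjection_span_singleton_eq_inner_div_inner_smul, hinner] using hp j
  · simpa only [starProjection_span_singleton_eq_inner_div_inner_smul, hinner] using he j

/-- Local optimality: in the preconditioned method with variable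
preconditioning, if `x l ≠ x*` for all `l ≤ k`, then `‖e (k+1)‖_A` is the minimum of
`‖e k − p‖_A` over all `p` in `span {s k, p (k − m k), …, p (k−1)}` (the minimum is
attained, and `‖e (k+1)‖_A ≤ ‖e k − p‖_A` for every `p` in that span). -/
theorem local_optimality
    {n : ℕ} (A : Matrix (Fin n) (Fin n) ℝ) (hA : A.PosDef)
    (b x0 : Fin n → ℝ)
    (B : ℕ → Matrix (Fin n) (Fin n) ℝ) (hB : ∀ k, (B k).PosDef)
    (m : ℕ → ℕ) (hm0 : m 0 = 0) (hmle : ∀ k, m k ≤ k) (hmsucc : ∀ k, m (k + 1) ≤ m k + 1)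
    (x r s p e : ℕ → Fin n → ℝ)
    (hx0 : x 0 = x0)
    (hr : ∀ k, r k = b - A *ᵥ x k)
    (hs : ∀ k, s k = (B k)⁻¹ *ᵥ r k)
    (hp : ∀ k, p k = s k - ∑ l ∈ Finset.Ico (k - m k) k,
        (((A *ᵥ s k) ⬝ᵥ p l) / ((A *ᵥ p l) ⬝ᵥ p l)) • p l)
    (hxs : ∀ k, x (k + 1) = x k + ((r k ⬝ᵥ p k) / ((A *ᵥ p k) ⬝ᵥ p k)) • p k)
    (he : ∀ k, e k = A⁻¹ *ᵥ b - x k)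
    (k : ℕ) (hexact : ∀ l ≤ k, x l ≠ A⁻¹ *ᵥ b) :
    IsLeast
      {t : ℝ | ∃ q ∈ Submodule.span ℝ (insert (s k) (p '' Set.Ico (k - m k) k)),
        t = anorm A (e k - q)}
      (anorm A (e (k + 1))) := by
  have hAe (j : ℕ) : A *ᵥ e j = r j := by rw [he, hr, mulVec_inv_mulVec_sub hA.isUnit]
  exact isLeast_anorm_error_succ hA (monotone_self_sub_of_succ_le_add_one hmsucc) hp
    (fun j => by rw [hAe, he, he, hxs, sub_add_eq_sub_sub]) k
end

section
/- One step of the preconditioned steepest descent method satisfies the classical convergence rate bound: let A and B be n×n real symmetric positive definite matrices such that there exist 0 < a ≤ b with b/a ≤ κmax and a⟨B u, u⟩ ≤ ⟨A u, u⟩ ≤ b⟨B u, u⟩ for all u ∈ ℝⁿ. Let b ∈ ℝⁿ, x* = A⁻¹b, x ∈ ℝⁿ with e = x* − x, s = B⁻¹A e, x' = x + (⟨A e, s⟩/⟨A s, s⟩) s, and e' = x* − x'. Then ‖e'‖_A ≤ ((κmax − 1)/(κmax + 1)) · ‖e‖_A. -/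
/-!
Exact line search along `s` minimizes the error energy among all step lengths, so it does at least
as well as the fixed step `2 / (a + c)`. With `T = B⁻¹A`, whose spectrum lies in `[a, c]`, the
fixed step multiplies the error by `1 - 2T / (a + c)`, which contracts the energy norm by
`(c - a) / (c + a)` because `(T - a)(c - T)` is nonnegative. Writing the preconditioner as the
relation `B s = A e` turns this into an argument about two bilinear forms on a vector space.
-/

open Matrix

theorem bilinForm_sub_smul_self {R M : Type*} [CommRing R] [AddCommGroup M] [Module R M]
    {α : LinearMap.BilinForm R M} (hα : α.IsSymm) (e s : M) (t : R) :
    α (e - t • s) (e - t • s) = α e e - 2 * t * α e s + t ^ 2 * α s s := by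
  simp only [map_sub, map_smul, LinearMap.sub_apply, LinearMap.smul_apply, smul_eq_mul, hα.eq s e]
  ring

section OrderedField

variable {K V : Type*} [Field K] [LinearOrder K] [IsStrictOrderedRing K]
  [AddCommGroup V] [Module K V] {α β : LinearMap.BilinForm K V}

theorem bilinForm_exact_step_le (hα : α.IsPosSemidef) (e s : V) (t : K) :
    α (e - (α e s / α s s) • s) (e - (α e s / α s s) • s) ≤ α (e - t • s) (e - t • s) := by
  have hstep : α e s / α s s * α s s = α e s := by
    refine div_mul_cancel_of_imp fun hs => ?_
    have hcs := α.apply_sq_le_of_symm hα.nonneg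
      (LinearMap.BilinForm.isSymm_iff.mp hα.isSymm) e s
    rw [hs, mul_zero] at hcs
    exact pow_eq_zero_iff two_ne_zero |>.mp (hcs.antisymm (sq_nonneg _))
  rw [bilinForm_sub_smul_self hα.isSymm, bilinForm_sub_smul_self hα.isSymm]
  generalize α e s / α s s = r at hstep
  have hgap : 0 ≤ (t - r) ^ 2 * α s s := mul_nonneg (sq_nonneg _) (hα.nonneg s)
  linear_combination hgap - 2 * (t - r) * hstep

variable {a c : K} {e s : V}

-- In terms of `T = β⁻¹α` this is the positivity of `T (T - a) (c - T)`.
theorem bilinForm_sub_smul_smul_sub_nonneg (hα : α.IsSymm) (hβ : β.IsSymm)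
    (ha : 0 ≤ a) (hac : a ≤ c) (hlow : ∀ u, a * β u u ≤ α u u) (hup : ∀ u, α u u ≤ c * β u u)
    (hs : β s = α e) :
    0 ≤ α (s - a • e) (c • e - s) := by
  rcases hac.eq_or_lt with rfl | hlt
  · have hαβ : α = a • β :=
      LinearMap.BilinForm.ext_of_isSymm hα (hβ.smul a) fun u => (hup u).antisymm (hlow u)
    have hzero : α (s - a • e) = 0 := by
      rw [map_sub, map_smul, ← hs, hαβ, LinearMap.smul_apply, sub_self]
    simp only [hzero, LinearMap.zero_apply, le_refl]
  · set w := s - a • e with hw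
    set v := c • e - s with hv
    -- `c w + a v = (c - a) s` and `w + v = (c - a) e`
    have hwv (z : V) : c * β w z + a * β v z = α w z + α v z := by
      have hsz : β s z = α e z := by rw [hs]
      simp only [hw, hv, map_sub, map_smul, LinearMap.sub_apply, LinearMap.smul_apply, smul_eq_mul]
      linear_combination (c - a) * hsz
    have hlower : a * β w v ≤ α w v := by
      have hww := hwv w
      rw [hα.eq v w, hβ.eq v w] at hww
      linarith [hup w]
    have hupper : α w v ≤ c * β w v := by
      linarith [hwv v, hlow v]
    have hβwv : 0 ≤ β w v :=
      nonneg_of_mul_nonneg_right (by linarith : 0 ≤ (c - a) * β w v) (sub_pos.mpr hlt)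
    exact (mul_nonneg ha hβwv).trans hlower

theorem bilinForm_fixed_step_le (hα : α.IsSymm) (hβ : β.IsSymm)
    (ha : 0 < a) (hac : a ≤ c) (hlow : ∀ u, a * β u u ≤ α u u) (hup : ∀ u, α u u ≤ c * β u u)
    (hs : β s = α e) :
    α (e - (2 / (a + c)) • s) (e - (2 / (a + c)) • s) ≤ ((c - a) / (c + a)) ^ 2 * α e e := by
  have hpos : 0 < c + a := by linarith
  have hne : a + c ≠ 0 := by linarith
  have hdefect : ((c - a) / (c + a)) ^ 2 * α e e
        - α (e - (2 / (a + c)) • s) (e - (2 / (a + c)) • s)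
      = 4 / (c + a) ^ 2 * α (s - a • e) (c • e - s) := by
    rw [bilinForm_sub_smul_self hα]
    simp only [map_sub, map_smul, LinearMap.sub_apply, LinearMap.smul_apply, smul_eq_mul,
      hα.eq s e]
    field_simp
    ring
  have hnonneg := bilinForm_sub_smul_smul_sub_nonneg hα hβ ha.le hac hlow hup hs
  exact sub_nonneg.mp (hdefect ▸ by positivity)

theorem sub_div_add_le_of_div_le {κ : K} (ha : 0 < a) (hc : 0 ≤ c) (hκ : c / a ≤ κ) :
    (c - a) / (c + a) ≤ (κ - 1) / (κ + 1) := by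
  have hκ0 : 0 ≤ κ := (div_nonneg hc ha.le).trans hκ
  rw [div_le_div_iff₀ (by positivity) (by positivity)]
  linarith [(div_le_iff₀ ha).mp hκ]

end OrderedField

theorem sd_convergence_bound_general {V : Type*} [AddCommGroup V] [Module ℝ V]
    {α β : LinearMap.BilinForm ℝ V} (hα : α.IsPosSemidef) (hβ : β.IsSymm)
    {κmax a c : ℝ} (ha : 0 < a) (hac : a ≤ c) (hκ : c / a ≤ κmax)
    (hlow : ∀ u, a * β u u ≤ α u u) (hup : ∀ u, α u u ≤ c * β u u)
    {e s : V} (hs : β s = α e) :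
    √(α (e - (α e s / α s s) • s) (e - (α e s / α s s) • s))
      ≤ (κmax - 1) / (κmax + 1) * √(α e e) := by
  have hrate : 0 ≤ (c - a) / (c + a) := div_nonneg (by linarith) (by linarith)
  calc √(α (e - (α e s / α s s) • s) (e - (α e s / α s s) • s))
      ≤ √(((c - a) / (c + a)) ^ 2 * α e e) :=
        Real.sqrt_le_sqrt <| (bilinForm_exact_step_le hα e s (2 / (a + c))).trans
          (bilinForm_fixed_step_le hα.isSymm hβ ha hac hlow hup hs)
    _ = (c - a) / (c + a) * √(α e e) := by
        rw [Real.sqrt_mul (sq_nonneg _), Real.sqrt_sq hrate]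
    _ ≤ (κmax - 1) / (κmax + 1) * √(α e e) := by
        gcongr ?_ * _
        exact sub_div_add_le_of_div_le ha (ha.le.trans hac) hκ

section MatrixForms

variable {n R : Type*} [Fintype n] [CommRing R]

/-- The `A`-inner product `⟨x, y⟩_A = ⟨A x, y⟩` as a bilinear form. The matrix acts on the first
argument, unlike in `Matrix.toBilin'`, so that the energies in the theorem are its values by
definition. -/
def ainner (A : Matrix n n R) : LinearMap.BilinForm R (n → R) :=
  dotProductBilin R R ∘ₗ A.mulVecLin

theorem ainner_apply (A : Matrix n n R) (x y : n → R) : ainner A x y = (A *ᵥ x) ⬝ᵥ y := rfl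

theorem isSymm_ainner {A : Matrix n n R} (hA : A.IsSymm) : (ainner A).IsSymm where
  eq x y := by
    rw [ainner_apply, ainner_apply, dotProduct_comm, dotProduct_mulVec, ← mulVec_transpose, hA.eq]

theorem isPosSemidef_ainner [PartialOrder R] [StarRing R] [TrivialStar R] {A : Matrix n n R}
    (hA : A.PosSemidef) : (ainner A).IsPosSemidef where
  __ := isSymm_ainner (isHermitian_iff_isSymm.mp hA.isHermitian)
  nonneg x := by
    simpa only [ainner_apply, dotProduct_comm, star_trivial] using hA.dotProduct_mulVec_nonneg x

theorem ainner_inv_mulVec [DecidableEq n] {B : Matrix n n R} (hB : IsUnit B) (A : Matrix n n R)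
    (x : n → R) : ainner B (B⁻¹ *ᵥ (A *ᵥ x)) = ainner A x := by
  refine LinearMap.ext fun y => ?_
  rw [ainner_apply, ainner_apply, mulVec_mulVec,
    mul_nonsing_inv B ((isUnit_iff_isUnit_det B).mp hB), one_mulVec]

end MatrixForms

/-- One step of the preconditioned steepest descent method satisfies the
classical convergence rate bound `‖e'‖_A ≤ ((κmax − 1)/(κmax + 1)) ‖e‖_A`, assuming
`a ⟨B u, u⟩ ≤ ⟨A u, u⟩ ≤ c ⟨B u, u⟩` for all `u`, with `0 < a ≤ c` and `c/a ≤ κmax`. -/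
theorem sd_convergence_bound
    {n : ℕ} (A B : Matrix (Fin n) (Fin n) ℝ) (hA : A.PosDef) (hB : B.PosDef)
    (κmax a c : ℝ) (ha : 0 < a) (hac : a ≤ c) (hκ : c / a ≤ κmax)
    (hlow : ∀ u : Fin n → ℝ, a * ((B *ᵥ u) ⬝ᵥ u) ≤ (A *ᵥ u) ⬝ᵥ u)
    (hup : ∀ u : Fin n → ℝ, (A *ᵥ u) ⬝ᵥ u ≤ c * ((B *ᵥ u) ⬝ᵥ u))
    (b x : Fin n → ℝ)
    (e : Fin n → ℝ) (he : e = A⁻¹ *ᵥ b - x)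
    (s : Fin n → ℝ) (hs : s = B⁻¹ *ᵥ (A *ᵥ e))
    (x' : Fin n → ℝ) (hx' : x' = x + (((A *ᵥ e) ⬝ᵥ s) / ((A *ᵥ s) ⬝ᵥ s)) • s)
    (e' : Fin n → ℝ) (he' : e' = A⁻¹ *ᵥ b - x') :
    anorm A e' ≤ ((κmax - 1) / (κmax + 1)) * anorm A e := by
  have hBs : ainner B s = ainner A e := hs ▸ ainner_inv_mulVec hB.isUnit A e
  have he_step : e' = e - (ainner A e s / ainner A s s) • s := by
    rw [he', hx', he, sub_add_eq_sub_sub, ainner_apply, ainner_apply]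
  rw [he_step]
  exact sd_convergence_bound_general (isPosSemidef_ainner hA.posSemidef)
    (isPosSemidef_ainner hB.posSemidef).isSymm ha hac hκ hlow hup hBs
end

section
/- In the preconditioned method with variable preconditioning, assume each preconditioner satisfies κ(B_k⁻¹A) ≤ κmax, i.e., there exist 0 < a_k ≤ b_k with b_k/a_k ≤ κmax and a_k⟨B_k u, u⟩ ≤ ⟨A u, u⟩ ≤ b_k⟨B_k u, u⟩ for all u ∈ ℝⁿ. If x_l ≠ x* for all l ≤ k, then ‖e_{k+1}‖_A ≤ ((κmax − 1)/(κmax + 1)) · ‖e_k‖_A. -/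
open Matrix

/-!
In the inner product `⟪u, v⟫ = ⟨A u, v⟩`, the method orthogonalizes `s_k` against the search
directions of the current window and removes from the error `e_k` its component along the new
direction `p_k`. Since windows grow by at most one index at a time, `e_{k+1}` is orthogonal to the
whole window, whose span contains both `e_k - e_{k+1}` and `s_k`. Hence
`‖e_{k+1}‖ ≤ ‖e_k - t s_k‖` for every `t`: the method is at least as good as any preconditioned
steepest descent step, and `t = 2 / (a + c)` gives the Chebyshev contraction factor
`(c - a) / (c + a)`.
-/

section InnerProductSpace

variable {𝕜 E : Type*} [RCLike 𝕜] [NormedAddCommGroup E] [InnerProductSpace 𝕜 E]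

theorem inner_sub_sum_starProjection_eq_zero {ι : Type*} {p : ι → E} {t : Finset ι}
    (horth : (t : Set ι).Pairwise fun i j => inner 𝕜 (p i) (p j) = 0) (x : E) {j : ι} (hj : j ∈ t) :
    inner 𝕜 (p j) (x - ∑ i ∈ t, (𝕜 ∙ p i).starProjection x) = 0 := by
  have hsum : inner 𝕜 (p j) (∑ i ∈ t, (𝕜 ∙ p i).starProjection x) =
      inner 𝕜 (p j) ((𝕜 ∙ p j).starProjection x) := by
    rw [inner_sum, Finset.sum_eq_single_of_mem j hj]
    intro i hi hij
    rw [Submodule.starProjection_singleton, inner_smul_right, horth hj hi hij.symm, mul_zero]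
  rw [inner_sub_right, hsum, ← inner_sub_right]
  exact Submodule.sub_starProjection_mem_orthogonal x _ (Submodule.mem_span_singleton_self _)

theorem norm_le_norm_add_of_mem_orthogonal {W : Submodule 𝕜 E} {x w : E} (hx : x ∈ Wᗮ)
    (hw : w ∈ W) : ‖x‖ ≤ ‖x + w‖ := by
  rw [mul_self_le_mul_self_iff (norm_nonneg _) (norm_nonneg _),
    norm_add_sq_eq_norm_sq_add_norm_sq_of_inner_eq_zero x w
      (Submodule.inner_left_of_mem_orthogonal hw hx)]
  exact le_add_of_nonneg_right (mul_self_nonneg _)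

theorem starProjection_span_singleton_mem_span_image {ι : Type*} (p : ι → E) {t : Set ι} {l : ι}
    (hl : l ∈ t) (x : E) : (𝕜 ∙ p l).starProjection x ∈ Submodule.span 𝕜 (p '' t) := by
  rw [Submodule.starProjection_singleton]
  exact Submodule.smul_mem _ _ (Submodule.subset_span ⟨l, hl, rfl⟩)

variable (𝕜) in
/-- Truncated Gram-Schmidt: `p k` is the residual of `s k` after projecting onto each of the `m k`
preceding directions separately. The windows `[k - m k, k)` never reach further back than their
predecessor did, so that the retained directions stay mutually orthogonal. -/
structure IsTruncatedGramSchmidt_s10 (m : ℕ → ℕ) (s p : ℕ → E) : Prop where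
  window_succ_le : ∀ k, m (k + 1) ≤ m k + 1
  direction_eq : ∀ k,
    p k = s k - ∑ l ∈ Finset.Ico (k - m k) k, (𝕜 ∙ p l).starProjection (s k)

namespace IsTruncatedGramSchmidt_s10

variable {m : ℕ → ℕ} {s p e : ℕ → E}

theorem Ico_succ_subset_Icc (h : IsTruncatedGramSchmidt_s10 𝕜 m s p) (k : ℕ) :
    Finset.Ico (k + 1 - m (k + 1)) (k + 1) ⊆ Finset.Icc (k - m k) k := by
  intro l hl
  have := h.window_succ_le k
  simp only [Finset.mem_Ico, Finset.mem_Icc] at hl ⊢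
  omega

theorem pairwise_inner_eq_zero (h : IsTruncatedGramSchmidt_s10 𝕜 m s p) (k : ℕ) :
    (Finset.Icc (k - m k) k : Set ℕ).Pairwise fun i j => inner 𝕜 (p i) (p j) = 0 := by
  have extend (k : ℕ) (hk : (Finset.Ico (k - m k) k : Set ℕ).Pairwise
      fun i j => inner 𝕜 (p i) (p j) = 0) :
      (Finset.Icc (k - m k) k : Set ℕ).Pairwise fun i j => inner 𝕜 (p i) (p j) = 0 := by
    have : Std.Symm fun i j => inner 𝕜 (p i) (p j) = 0 := ⟨fun _ _ => inner_eq_zero_symm.mp⟩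
    rw [← Finset.Ico_insert_right (Nat.sub_le k (m k)), Finset.coe_insert,
      Set.pairwise_insert_of_symm]
    refine ⟨hk, fun l hl _ => inner_eq_zero_symm.mp ?_⟩
    rw [h.direction_eq k]
    exact inner_sub_sum_starProjection_eq_zero hk (s k) hl
  induction k with
  | zero => simp
  | succ k ih => exact extend (k + 1) (ih.mono (h.Ico_succ_subset_Icc k))

theorem mem_span_window (h : IsTruncatedGramSchmidt_s10 𝕜 m s p) (k : ℕ) :
    s k ∈ Submodule.span 𝕜 (p '' Set.Icc (k - m k) k) := by
  rw [← sub_add_cancel (s k) (∑ l ∈ Finset.Ico (k - m k) k, (𝕜 ∙ p l).starProjection (s k)),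
    ← h.direction_eq k]
  refine add_mem (Submodule.subset_span ⟨k, by simp, rfl⟩) (Submodule.sum_mem _ fun l hl => ?_)
  exact starProjection_span_singleton_mem_span_image p
    (Finset.mem_Icc.mp (Finset.Ico_subset_Icc_self hl)) (s k)

theorem inner_error_succ_eq_zero_s10 (h : IsTruncatedGramSchmidt_s10 𝕜 m s p)
    (he : ∀ k, e (k + 1) = e k - (𝕜 ∙ p k).starProjection (e k)) (k : ℕ) :
    ∀ l ∈ Finset.Icc (k - m k) k, inner 𝕜 (p l) (e (k + 1)) = 0 := by
  have extend (k : ℕ) (hk : ∀ l ∈ Finset.Ico (k - m k) k, inner 𝕜 (p l) (e k) = 0) :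
      ∀ l ∈ Finset.Icc (k - m k) k, inner 𝕜 (p l) (e (k + 1)) = 0 := by
    rw [← Finset.Ico_insert_right (Nat.sub_le k (m k)), Finset.forall_mem_insert, he k]
    refine ⟨Submodule.sub_starProjection_mem_orthogonal _ _ (Submodule.mem_span_singleton_self _),
      fun l hl => ?_⟩
    have hlk : inner 𝕜 (p l) (p k) = 0 :=
      h.pairwise_inner_eq_zero k (Finset.mem_coe.mpr (Finset.Ico_subset_Icc_self hl)) (by simp)
        (Finset.mem_Ico.mp hl).2.ne
    rw [inner_sub_right, hk l hl, Submodule.starProjection_singleton, inner_smul_right, hlk,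
      mul_zero, sub_zero]
  induction k with
  | zero => exact extend 0 (by simp)
  | succ k ih => exact extend (k + 1) fun l hl => ih l (h.Ico_succ_subset_Icc k hl)

theorem error_succ_mem_orthogonal_s10 (h : IsTruncatedGramSchmidt_s10 𝕜 m s p)
    (he : ∀ k, e (k + 1) = e k - (𝕜 ∙ p k).starProjection (e k)) (k : ℕ) :
    e (k + 1) ∈ (Submodule.span 𝕜 (p '' Set.Icc (k - m k) k))ᗮ := by
  rw [← Submodule.span_singleton_le_iff_mem, ← Submodule.isOrtho_iff_le, Submodule.isOrtho_comm,
    Submodule.isOrtho_span]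
  rintro _ ⟨l, hl, rfl⟩ _ rfl
  exact h.inner_error_succ_eq_zero_s10 he k l (Finset.mem_Icc.mpr hl)

theorem norm_error_succ_le (h : IsTruncatedGramSchmidt_s10 𝕜 m s p)
    (he : ∀ k, e (k + 1) = e k - (𝕜 ∙ p k).starProjection (e k)) (k : ℕ) (t : 𝕜) :
    ‖e (k + 1)‖ ≤ ‖e k - t • s k‖ := by
  set W := Submodule.span 𝕜 (p '' Set.Icc (k - m k) k)
  have hstep : (𝕜 ∙ p k).starProjection (e k) ∈ W :=
    starProjection_span_singleton_mem_span_image p (by simp) (e k)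
  have hsplit : e k - t • s k = e (k + 1) + ((𝕜 ∙ p k).starProjection (e k) - t • s k) := by
    rw [he k]; abel
  rw [hsplit]
  exact norm_le_norm_add_of_mem_orthogonal (h.error_succ_mem_orthogonal_s10 he k)
    (W.sub_mem hstep (W.smul_mem t (h.mem_span_window k)))

end IsTruncatedGramSchmidt_s10

end InnerProductSpace

section Contraction

variable {E : Type*} [NormedAddCommGroup E] [InnerProductSpace ℝ E]

theorem inner_map_sq_le {T : E →ₗ[ℝ] E} (hT : T.IsPositive) (x y : E) :
    inner ℝ (T x) y ^ 2 ≤ inner ℝ (T x) x * inner ℝ (T y) y := by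
  refine LinearMap.BilinForm.apply_sq_le_of_symm (innerₗ E ∘ₗ T) hT.inner_nonneg_left ⟨?_⟩ x y
  intro u v
  exact (hT.isSymmetric u v).trans (real_inner_comm _ _)

theorem norm_sq_le_mul_inner_of_le_smul_one {T : E →ₗ[ℝ] E} (hT : T.IsPositive) {M : ℝ}
    (hTM : T ≤ M • 1) (x : E) : ‖T x‖ ^ 2 ≤ M * inner ℝ (T x) x := by
  have hbound : inner ℝ (T (T x)) (T x) ≤ M * ‖T x‖ ^ 2 := by
    simpa [inner_sub_left, real_inner_smul_left] using hTM.2 (T x)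
  rcases eq_or_ne (T x) 0 with hx | hx
  · simp [hx]
  refine le_of_mul_le_mul_left ?_ (show 0 < ‖T x‖ ^ 2 by positivity)
  calc
    ‖T x‖ ^ 2 * ‖T x‖ ^ 2 = inner ℝ (T x) (T x) ^ 2 := by
      rw [real_inner_self_eq_norm_sq, ← sq]
    _ ≤ inner ℝ (T x) x * inner ℝ (T (T x)) (T x) := inner_map_sq_le hT x (T x)
    _ ≤ inner ℝ (T x) x * (M * ‖T x‖ ^ 2) :=
      mul_le_mul_of_nonneg_left hbound (hT.inner_nonneg_left x)
    _ = ‖T x‖ ^ 2 * (M * inner ℝ (T x) x) := by ring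

theorem mul_norm_sq_add_norm_sq_le {S : E →ₗ[ℝ] E} {a c : ℝ} (ha : 0 < a) (hc : 0 < c)
    (hlow : a • S ≤ 1) (hup : 1 ≤ c • S) (x : E) :
    a * c * ‖S x‖ ^ 2 + ‖x‖ ^ 2 ≤ (a + c) * inner ℝ (S x) x := by
  have hT_le : c • S - 1 ≤ ((c - a) / a) • (1 : E →ₗ[ℝ] E) := by
    have hscale : ((c - a) / a) • (1 : E →ₗ[ℝ] E) - (c • S - 1) = (c / a) • (1 - a • S) := by
      rw [sub_div, div_self ha.ne', smul_sub (c / a), smul_smul (c / a) a, div_mul_cancel₀ _ ha.ne']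
      module
    rw [LinearMap.le_def, hscale]
    exact hlow.smul_of_nonneg (by positivity)
  have hcoercive := norm_sq_le_mul_inner_of_le_smul_one hup hT_le x
  simp only [LinearMap.sub_apply, LinearMap.smul_apply, Module.End.one_apply, norm_sub_sq_real,
    norm_smul, real_inner_smul_left, inner_sub_left, real_inner_self_eq_norm_sq, mul_pow,
    Real.norm_eq_abs, sq_abs] at hcoercive
  field_simp at hcoercive
  refine le_of_mul_le_mul_left ?_ hc
  linarith

theorem norm_sub_smul_le {S : E →ₗ[ℝ] E} {a c : ℝ} (ha : 0 < a) (hac : a ≤ c)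
    (hlow : a • S ≤ 1) (hup : 1 ≤ c • S) (x : E) :
    ‖S x - (2 / (c + a)) • x‖ ≤ (c - a) / (c + a) * ‖S x‖ := by
  have hac_pos : 0 < c + a := by linarith
  have hρ : 0 ≤ (c - a) / (c + a) := div_nonneg (sub_nonneg.mpr hac) hac_pos.le
  have hkey := mul_norm_sq_add_norm_sq_le ha (ha.trans_le hac) hlow hup x
  rw [← sq_le_sq₀ (norm_nonneg _) (mul_nonneg hρ (norm_nonneg _))]
  calc
    ‖S x - (2 / (c + a)) • x‖ ^ 2
        = ‖S x‖ ^ 2 - (2 / (c + a)) ^ 2 * ((a + c) * inner ℝ (S x) x - ‖x‖ ^ 2) := by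
      rw [norm_sub_sq_real, real_inner_smul_right, norm_smul, mul_pow, Real.norm_eq_abs, sq_abs]
      field_simp
      ring
    _ ≤ ‖S x‖ ^ 2 - (2 / (c + a)) ^ 2 * (a * c * ‖S x‖ ^ 2) := by
      gcongr
      linarith
    _ = ((c - a) / (c + a) * ‖S x‖) ^ 2 := by
      field_simp
      ring

theorem sub_div_add_le {a c κ : ℝ} (ha : 0 < a) (hac : a ≤ c) (hκ : c / a ≤ κ) :
    (c - a) / (c + a) ≤ (κ - 1) / (κ + 1) := by
  have hκ_one : 1 ≤ κ := ((one_le_div ha).2 hac).trans hκ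
  rw [div_le_div_iff₀ (by linarith) (by linarith)]
  linarith [(div_le_iff₀ ha).1 hκ]

theorem pcg_convergence_bound_general {m : ℕ → ℕ} {s p e : ℕ → E}
    (h : IsTruncatedGramSchmidt_s10 ℝ m s p)
    (he : ∀ k, e (k + 1) = e k - (ℝ ∙ p k).starProjection (e k))
    {k : ℕ} {S : E →ₗ[ℝ] E} (hS : S (s k) = e k)
    {a c κ : ℝ} (ha : 0 < a) (hac : a ≤ c) (hκ : c / a ≤ κ)
    (hlow : a • S ≤ 1) (hup : 1 ≤ c • S) :
    ‖e (k + 1)‖ ≤ (κ - 1) / (κ + 1) * ‖e k‖ :=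
  calc
    ‖e (k + 1)‖ ≤ ‖S (s k) - (2 / (c + a)) • s k‖ := hS ▸ h.norm_error_succ_le he k _
    _ ≤ (c - a) / (c + a) * ‖e k‖ := hS ▸ norm_sub_smul_le ha hac hlow hup (s k)
    _ ≤ (κ - 1) / (κ + 1) * ‖e k‖ :=
      mul_le_mul_of_nonneg_right (sub_div_add_le ha hac hκ) (norm_nonneg _)

end Contraction

section EnergySpace

variable {ι : Type*} [Fintype ι] {A : Matrix ι ι ℝ}

/-- The space `ℝ^ι` with the energy inner product `⟪u, v⟫ = ⟨A v, u⟩` of a positive definite matrix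
`A`; a separate type, because `ι → ℝ` carries the sup norm. -/
def EnergySpace (_hA : A.PosDef) : Type _ := ι → ℝ

namespace EnergySpace

noncomputable instance (hA : A.PosDef) : NormedAddCommGroup (EnergySpace hA) :=
  A.toNormedAddCommGroup hA

noncomputable instance (hA : A.PosDef) : InnerProductSpace ℝ (EnergySpace hA) :=
  A.toInnerProductSpace hA.posSemidef

/-- The identity map, regarding a coordinate vector as an element of the energy space. -/
noncomputable def of (hA : A.PosDef) : (ι → ℝ) ≃ₗ[ℝ] EnergySpace hA := LinearEquiv.refl ℝ _

theorem inner_of (hA : A.PosDef) (u v : ι → ℝ) : inner ℝ (of hA u) (of hA v) = (A *ᵥ v) ⬝ᵥ u := rfl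

theorem norm_of {n : ℕ} {A : Matrix (Fin n) (Fin n) ℝ} (hA : A.PosDef) (v : Fin n → ℝ) :
    ‖of hA v‖ = anorm A v := by
  rw [norm_eq_sqrt_real_inner, inner_of]
  rfl

theorem starProjection_span_singleton_of (hA : A.PosDef) (u v : ι → ℝ) :
    (ℝ ∙ of hA v).starProjection (of hA u) =
      of hA ((((A *ᵥ u) ⬝ᵥ v) / ((A *ᵥ v) ⬝ᵥ v)) • v) := by
  rw [Submodule.starProjection_singleton, ← real_inner_self_eq_norm_sq, inner_of, inner_of,
    map_smul]
  rfl

theorem isTruncatedGramSchmidt_of (hA : A.PosDef) {m : ℕ → ℕ} {s p : ℕ → ι → ℝ}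
    (hm : ∀ k, m (k + 1) ≤ m k + 1)
    (hp : ∀ k, p k = s k - ∑ l ∈ Finset.Ico (k - m k) k,
      (((A *ᵥ s k) ⬝ᵥ p l) / ((A *ᵥ p l) ⬝ᵥ p l)) • p l) :
    IsTruncatedGramSchmidt_s10 ℝ m (fun k => of hA (s k)) (fun k => of hA (p k)) where
  window_succ_le := hm
  direction_eq k := by
    simp only [starProjection_span_singleton_of, ← map_sum, ← map_sub, ← hp k]

variable [DecidableEq ι] {B : Matrix ι ι ℝ}

theorem mulVec_inv_mulVec (hA : A.PosDef) (v : ι → ℝ) : A *ᵥ (A⁻¹ *ᵥ v) = v := by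
  rw [mulVec_mulVec, mul_nonsing_inv _ hA.det_pos.ne'.isUnit, one_mulVec]

theorem residual_eq_mulVec_error (hA : A.PosDef) (b x : ι → ℝ) :
    b - A *ᵥ x = A *ᵥ (A⁻¹ *ᵥ b - x) := by
  rw [mulVec_sub, mulVec_inv_mulVec hA]

theorem of_error_sub_step (hA : A.PosDef) (b x p : ι → ℝ) :
    of hA (A⁻¹ *ᵥ b - (x + (((b - A *ᵥ x) ⬝ᵥ p) / ((A *ᵥ p) ⬝ᵥ p)) • p)) =
      of hA (A⁻¹ *ᵥ b - x) - (ℝ ∙ of hA p).starProjection (of hA (A⁻¹ *ᵥ b - x)) := by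
  rw [starProjection_span_singleton_of, ← residual_eq_mulVec_error hA, ← map_sub,
    sub_add_eq_sub_sub]

/-- The operator `A⁻¹ B`, which represents the bilinear form `⟨B u, v⟩` in the energy inner product
of `A`; it is the inverse of the preconditioned operator `B⁻¹ A`. -/
noncomputable def formOperator (hA : A.PosDef) :
    Matrix ι ι ℝ →ₗ[ℝ] EnergySpace hA →ₗ[ℝ] EnergySpace hA :=
  (of hA).conj.toLinearMap ∘ₗ toLin'.toLinearMap ∘ₗ LinearMap.mulLeft ℝ A⁻¹

theorem formOperator_of (hA : A.PosDef) (B : Matrix ι ι ℝ) (u : ι → ℝ) :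
    formOperator hA B (of hA u) = of hA (A⁻¹ *ᵥ (B *ᵥ u)) := by
  simp [formOperator, LinearEquiv.conj_apply]

theorem formOperator_of_preconditioned_residual (hA : A.PosDef) (hB : B.PosDef) (b x : ι → ℝ) :
    formOperator hA B (of hA (B⁻¹ *ᵥ (b - A *ᵥ x))) = of hA (A⁻¹ *ᵥ b - x) := by
  rw [formOperator_of, mulVec_inv_mulVec hB, mulVec_sub, mulVec_mulVec,
    nonsing_inv_mul _ hA.det_pos.ne'.isUnit, one_mulVec]

theorem inner_formOperator_of (hA : A.PosDef) (B : Matrix ι ι ℝ) (u v : ι → ℝ) :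
    inner ℝ (of hA u) (formOperator hA B (of hA v)) = (B *ᵥ v) ⬝ᵥ u := by
  rw [formOperator_of, inner_of, mulVec_inv_mulVec hA]

theorem isPositive_formOperator (hA : A.PosDef) (hB : B.IsHermitian)
    (hnonneg : ∀ u, 0 ≤ (B *ᵥ u) ⬝ᵥ u) : (formOperator hA B).IsPositive := by
  constructor
  · rw [LinearMap.IsSymmetric, (of hA).surjective.forall₂]
    intro u v
    have hBT : Bᵀ = B := (conjTranspose_eq_transpose_of_trivial B).symm.trans hB
    rw [real_inner_comm, inner_formOperator_of, inner_formOperator_of, dotProduct_comm,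
      dotProduct_mulVec, ← mulVec_transpose, hBT]
  · rw [(of hA).surjective.forall]
    intro u
    rw [real_inner_comm, inner_formOperator_of]
    exact hnonneg u

theorem formOperator_self (hA : A.PosDef) : formOperator hA A = 1 := by
  simp [formOperator, nonsing_inv_mul _ hA.det_pos.ne'.isUnit, Module.End.one_eq_id]

theorem smul_formOperator_le_one (hA : A.PosDef) (hB : B.IsHermitian) {a : ℝ}
    (h : ∀ u : ι → ℝ, a * ((B *ᵥ u) ⬝ᵥ u) ≤ (A *ᵥ u) ⬝ᵥ u) : a • formOperator hA B ≤ 1 := by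
  rw [LinearMap.le_def, ← formOperator_self hA, ← map_smul, ← map_sub]
  refine isPositive_formOperator hA (hA.isHermitian.sub (hB.smul (.all a))) fun u => ?_
  simpa [sub_mulVec, smul_mulVec] using h u

theorem one_le_smul_formOperator (hA : A.PosDef) (hB : B.IsHermitian) {c : ℝ}
    (h : ∀ u : ι → ℝ, (A *ᵥ u) ⬝ᵥ u ≤ c * ((B *ᵥ u) ⬝ᵥ u)) : 1 ≤ c • formOperator hA B := by
  rw [LinearMap.le_def, ← formOperator_self hA, ← map_smul, ← map_sub]
  refine isPositive_formOperator hA ((hB.smul (.all c)).sub hA.isHermitian) fun u => ?_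
  simpa [sub_mulVec, smul_mulVec] using h u

end EnergySpace

end EnergySpace

/-- Convergence rate bound for the preconditioned method with variable
preconditioning: if each preconditioner satisfies `κ(B_k⁻¹ A) ≤ κmax` (in the sense that
there are `0 < a_k ≤ b_k` with `b_k/a_k ≤ κmax` and
`a_k ⟨B_k u, u⟩ ≤ ⟨A u, u⟩ ≤ b_k ⟨B_k u, u⟩` for all `u`), and `x l ≠ x*` for all `l ≤ k`,
then `‖e (k+1)‖_A ≤ ((κmax − 1)/(κmax + 1)) ‖e k‖_A`. -/
theorem pcg_convergence_bound
    {n : ℕ} (A : Matrix (Fin n) (Fin n) ℝ) (hA : A.PosDef)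
    (b x0 : Fin n → ℝ)
    (B : ℕ → Matrix (Fin n) (Fin n) ℝ) (hB : ∀ k, (B k).PosDef)
    (κmax : ℝ)
    (hcond : ∀ k, ∃ a c : ℝ, 0 < a ∧ a ≤ c ∧ c / a ≤ κmax ∧
      (∀ u : Fin n → ℝ, a * ((B k *ᵥ u) ⬝ᵥ u) ≤ (A *ᵥ u) ⬝ᵥ u) ∧
      (∀ u : Fin n → ℝ, (A *ᵥ u) ⬝ᵥ u ≤ c * ((B k *ᵥ u) ⬝ᵥ u)))
    (m : ℕ → ℕ) (hm0 : m 0 = 0) (hmle : ∀ k, m k ≤ k) (hmsucc : ∀ k, m (k + 1) ≤ m k + 1)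
    (x r s p e : ℕ → Fin n → ℝ)
    (hx0 : x 0 = x0)
    (hr : ∀ k, r k = b - A *ᵥ x k)
    (hs : ∀ k, s k = (B k)⁻¹ *ᵥ r k)
    (hp : ∀ k, p k = s k - ∑ l ∈ Finset.Ico (k - m k) k,
        (((A *ᵥ s k) ⬝ᵥ p l) / ((A *ᵥ p l) ⬝ᵥ p l)) • p l)
    (hxs : ∀ k, x (k + 1) = x k + ((r k ⬝ᵥ p k) / ((A *ᵥ p k) ⬝ᵥ p k)) • p k)
    (he : ∀ k, e k = A⁻¹ *ᵥ b - x k)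
    (k : ℕ) (hexact : ∀ l ≤ k, x l ≠ A⁻¹ *ᵥ b) :
    anorm A (e (k + 1)) ≤ ((κmax - 1) / (κmax + 1)) * anorm A (e k) := by
  obtain ⟨a, c, ha, hac, hκ, hlow, hup⟩ := hcond k
  simpa only [EnergySpace.norm_of] using pcg_convergence_bound_general
    (EnergySpace.isTruncatedGramSchmidt_of hA hmsucc hp) (e := fun k => EnergySpace.of hA (e k))
    (fun k => by rw [he, hxs, hr, EnergySpace.of_error_sub_step, ← he])
    (by rw [hs, hr, EnergySpace.formOperator_of_preconditioned_residual hA (hB k), ← he]) ha hac hκ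
    (EnergySpace.smul_formOperator_le_one hA (hB k).isHermitian hlow)
    (EnergySpace.one_le_smul_formOperator hA (hB k).isHermitian hup)
end

section
/- The convergence rate bound for the method with variable preconditioning is sharp: let A be an n×n real symmetric positive definite matrix, b ∈ ℝⁿ, x₀ ∈ ℝⁿ with x₀ ≠ x* = A⁻¹b, let κmax > 1, and let K be a number of iterations with K < n. Then there exist real symmetric positive definite matrices B₀, …, B_{K−1}, each satisfying κ(B_k⁻¹A) ≤ κmax (i.e., there exist 0 < a_k ≤ b_k with b_k/a_k ≤ κmax and a_k⟨B_k u, u⟩ ≤ ⟨A u, u⟩ ≤ b_k⟨B_k u, u⟩ for all u), such that for every admissible choice of the integers m_k (0 ≤ m_k ≤ k, m_{k+1} ≤ m_k + 1) the method produces p_k = s_k for every k < K (i.e., it turns into the preconditioned steepest descent method) and ‖e_{k+1}‖_A / ‖e_k‖_A = (κmax − 1)/(κmax + 1) for every k < K. -/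
open Matrix

/-!
Write `q = (κmax - 1) / (κmax + 1)`. In dimension `n > K` one can choose errors `E 0, …, E K`
starting from `E 0 = A⁻¹ b - x₀`, with `‖E k‖_A = q ^ k ‖E 0‖_A`, such that the increments
`E k - E (k + 1)` are mutually `A`-orthogonal and `A`-orthogonal to all later errors. Since
`‖E (k + 1)‖_A = q ‖E k‖_A`, some `A`-orthogonal reflection `H` satisfies
`q H (E k) = E (k + 1)`, and the preconditioner with `(B k)⁻¹ A = 1 - q H` has spectrum in
`{1 - q, 1 + q}` and gives the search direction `E k - E (k + 1)`. By orthogonality this direction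
needs no correction against the previous ones and the exact line search takes step length one, so
the method reproduces the errors `E k`.
-/

section OrthogonalDescent

variable {V : Type*} [AddCommGroup V] [Module ℝ V] {φ : LinearMap.BilinForm ℝ V}

/-- The errors `E 0, …, E K` form an orthogonal descent: each `E k` is the `φ`-orthogonal residual
of every earlier `E l`, that is, `E l - E k` is `φ`-orthogonal to `E k`. This is the error history
of a descent method whose steps are exact and mutually conjugate. -/
def IsOrthogonalDescent (φ : LinearMap.BilinForm ℝ V) (K : ℕ) (E : ℕ → V) : Prop :=
  ∀ ⦃l k : ℕ⦄, l ≤ k → k ≤ K → φ (E l) (E k) = φ (E k) (E k)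

namespace IsOrthogonalDescent

variable {K : ℕ} {E : ℕ → V}

lemma apply_increment_succ (hE : IsOrthogonalDescent φ K E) {k : ℕ} (hk : k < K) :
    φ (E k - E (k + 1)) (E (k + 1)) = 0 := by
  rw [map_sub, LinearMap.sub_apply, hE k.le_succ hk, sub_self]

lemma apply_increment_increment (hE : IsOrthogonalDescent φ K E) {l k : ℕ} (hlk : l < k)
    (hk : k < K) : φ (E l - E (l + 1)) (E k - E (k + 1)) = 0 := by
  simp only [map_sub, LinearMap.sub_apply, hE hlk.le hk.le, hE (Nat.succ_le_of_lt hlk) hk.le,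
    hE (hlk.le.trans k.le_succ) hk, hE (Nat.succ_le_succ hlk.le) hk, sub_self]

end IsOrthogonalDescent

lemma exists_ne_zero_forall_apply_eq_zero (φ : LinearMap.BilinForm ℝ V) {m : ℕ} (v : Fin m → V)
    (hm : m < Module.finrank ℝ V) : ∃ d ≠ 0, ∀ i, φ (v i) d = 0 := by
  have : FiniteDimensional ℝ V := Module.finite_of_finrank_pos (m.zero_le.trans_lt hm)
  have hker : LinearMap.ker (LinearMap.pi fun i ↦ φ (v i)) ≠ ⊥ :=
    LinearMap.ker_ne_bot_of_finrank_lt (by simpa using hm)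
  obtain ⟨d, hd, hd₀⟩ := (Submodule.ne_bot_iff _).1 hker
  exact ⟨d, hd₀, fun i ↦ congrFun (LinearMap.mem_ker.1 hd) i⟩

lemma exists_apply_self_eq_and_forall_apply_eq_zero (hφ : φ.toQuadraticMap.PosDef) {m : ℕ}
    (v : Fin m → V) (hm : m < Module.finrank ℝ V) {c : ℝ} (hc : 0 ≤ c) :
    ∃ d, φ d d = c ∧ ∀ i, φ (v i) d = 0 := by
  obtain ⟨d, hd, hvd⟩ := exists_ne_zero_forall_apply_eq_zero φ v hm
  have hdd : 0 < φ d d := hφ d hd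
  refine ⟨√(c / φ d d) • d, ?_, fun i ↦ by rw [map_smul, hvd, smul_zero]⟩
  rw [map_smul, map_smul, LinearMap.smul_apply, smul_smul, Real.mul_self_sqrt (by positivity),
    smul_eq_mul, div_mul_cancel₀ _ hdd.ne']

lemma exists_apply_self_eq_and_forall_le_apply_eq (hsymm : φ.IsSymm)
    (hφ : φ.toQuadraticMap.PosDef) {K : ℕ} {E : ℕ → V} {c c' : ℝ}
    (hE : ∀ l ≤ K, φ (E l) (E K) = c) (hc' : 0 ≤ c') (hcc' : c' ≤ c)
    (hK : K + 1 < Module.finrank ℝ V) :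
    ∃ e, φ e e = c' ∧ ∀ l ≤ K, φ (E l) e = c' := by
  set ρ := c' / c
  have hρ : ρ * c = c' := div_mul_cancel_of_imp fun h ↦ le_antisymm (hcc'.trans h.le) hc'
  have hρ_le : ρ ≤ 1 := div_le_one_of_le₀ hcc' (hc'.trans hcc')
  obtain ⟨d, hdd, hd⟩ := exists_apply_self_eq_and_forall_apply_eq_zero hφ
    (fun i : Fin (K + 1) ↦ E i) hK (mul_nonneg hc' (sub_nonneg.2 hρ_le))
  have hEd : ∀ l ≤ K, φ (E l) d = 0 := fun l hl ↦ hd ⟨l, Nat.lt_succ_of_le hl⟩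
  refine ⟨ρ • E K + d, ?_, fun l hl ↦ ?_⟩
  · simp only [map_add, map_smul, LinearMap.add_apply, LinearMap.smul_apply, smul_eq_mul,
      hsymm.eq d (E K), hE K le_rfl, hEd K le_rfl, hdd]
    linear_combination ρ * hρ
  · rw [map_add, map_smul, hE l hl, hEd l hl, add_zero, smul_eq_mul, hρ]

theorem exists_isOrthogonalDescent (hsymm : φ.IsSymm) (hφ : φ.toQuadraticMap.PosDef) (e₀ : V)
    {c : ℕ → ℝ} (hc : Antitone c) (hc_nonneg : ∀ k, 0 ≤ c k) (hc₀ : φ e₀ e₀ = c 0) {K : ℕ}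
    (hK : K < Module.finrank ℝ V) :
    ∃ E : ℕ → V, E 0 = e₀ ∧ IsOrthogonalDescent φ K E ∧ ∀ k ≤ K, φ (E k) (E k) = c k := by
  suffices h : ∃ E : ℕ → V, E 0 = e₀ ∧ ∀ l k, l ≤ k → k ≤ K → φ (E l) (E k) = c k by
    obtain ⟨E, hE₀, hE⟩ := h
    exact ⟨E, hE₀, fun l k hlk hk ↦ by rw [hE l k hlk hk, hE k k le_rfl hk],
      fun k hk ↦ hE k k le_rfl hk⟩
  induction K with
  | zero =>
    refine ⟨fun _ ↦ e₀, rfl, fun l k _ hk ↦ ?_⟩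
    rw [hc₀, Nat.le_zero.1 hk]
  | succ K ih =>
    obtain ⟨E, hE₀, hE⟩ := ih (K.lt_succ_self.trans hK)
    obtain ⟨e, hee, hEe⟩ := exists_apply_self_eq_and_forall_le_apply_eq hsymm hφ
      (fun l hl ↦ hE l K hl le_rfl) (hc_nonneg (K + 1)) (hc K.le_succ) hK
    refine ⟨Function.update E (K + 1) e, by simpa using hE₀, fun l k hlk hk ↦ ?_⟩
    rcases hk.lt_or_eq with hk | rfl
    · rw [Function.update_of_ne (hlk.trans_lt hk).ne, Function.update_of_ne hk.ne]
      exact hE l k hlk (Nat.le_of_lt_succ hk)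
    rcases hlk.lt_or_eq with hl | rfl
    · rw [Function.update_of_ne hl.ne, Function.update_self]
      exact hEe l (Nat.le_of_lt_succ hl)
    · rw [Function.update_self, hee]

theorem exists_geometric_isOrthogonalDescent (hsymm : φ.IsSymm) (hφ : φ.toQuadraticMap.PosDef)
    {e₀ : V} (he₀ : e₀ ≠ 0) {q : ℝ} (hq₀ : 0 < q) (hq₁ : q ≤ 1) {K : ℕ}
    (hK : K < Module.finrank ℝ V) :
    ∃ E : ℕ → V, E 0 = e₀ ∧ IsOrthogonalDescent φ K E ∧ (∀ k ≤ K, 0 < φ (E k) (E k)) ∧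
      ∀ k < K, φ (E (k + 1)) (E (k + 1)) = q ^ 2 * φ (E k) (E k) := by
  have hpos : 0 < φ e₀ e₀ := hφ e₀ he₀
  have hanti : Antitone fun k ↦ (q ^ 2) ^ k * φ e₀ e₀ :=
    (pow_right_anti₀ (sq_nonneg q) (pow_le_one₀ hq₀.le hq₁)).mul_const hpos.le
  obtain ⟨E, hE₀, hE, hnorm⟩ := exists_isOrthogonalDescent hsymm hφ e₀ hanti
    (fun k ↦ by positivity) (by rw [pow_zero, one_mul]) hK
  refine ⟨E, hE₀, hE, fun k hk ↦ ?_, fun k hk ↦ ?_⟩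
  · rw [hnorm k hk]
    positivity
  · rw [hnorm (k + 1) hk, hnorm k hk.le, pow_succ', mul_assoc]

/-- Exact line search takes a unit step along `p` when `p` is orthogonal to the remaining error. -/
lemma div_smul_eq_self_of_apply_sub_eq_zero (hφ : φ.toQuadraticMap.Anisotropic) {e p : V}
    (h : φ p (e - p) = 0) : (φ p e / φ p p) • p = p := by
  rw [map_sub, sub_eq_zero] at h
  by_cases hp : p = 0
  · rw [hp, smul_zero]
  · rw [h, div_self fun h₀ : φ p p = 0 ↦ hp (hφ p h₀), one_smul]

end OrthogonalDescent

section Preconditioning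

variable {ι : Type*} [Fintype ι]

section EnergyForm

variable [DecidableEq ι] {A : Matrix ι ι ℝ}

lemma mulVec_dotProduct_eq_toBilin' (A : Matrix ι ι ℝ) (x y : ι → ℝ) :
    (A *ᵥ x) ⬝ᵥ y = A.toBilin' y x := by
  rw [toBilin'_apply', dotProduct_comm]

lemma isSymm_toBilin' (hA : A.IsHermitian) : A.toBilin'.IsSymm :=
  isSymm_toBilin'_iff_isSymm.2 (isHermitian_iff_isSymm.1 hA)

lemma posDef_toBilin' (hA : A.PosDef) : A.toBilin'.toQuadraticMap.PosDef :=
  hA.toQuadraticForm'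

lemma toBilin'_self_nonneg (hA : A.PosSemidef) (x : ι → ℝ) : 0 ≤ A.toBilin' x x := by
  rw [toBilin'_apply']
  exact hA.dotProduct_mulVec_nonneg x

end EnergyForm

/-- The preconditioner `B` with `B⁻¹ A = 1 - q H`, where `H` is the `A`-orthogonal reflection
fixing the line spanned by `g`. It is written through the inverse of `1 - q H`, a rank-one
modification of `(1 + q)⁻¹`. For `g = 0` the quotient is `0`, and `H = -1`. -/
noncomputable def reflectionPreconditioner (A : Matrix ι ι ℝ) (q : ℝ) (g : ι → ℝ) :
    Matrix ι ι ℝ :=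
  (1 + q)⁻¹ • A + (2 * q / (1 - q ^ 2) / (g ⬝ᵥ A *ᵥ g)) • vecMulVec (A *ᵥ g) (A *ᵥ g)

namespace reflectionPreconditioner

variable {A : Matrix ι ι ℝ} {q : ℝ}

lemma posDef (hA : A.PosDef) (hq₀ : 0 ≤ q) (hq₁ : q < 1) (g : ι → ℝ) :
    (reflectionPreconditioner A q g).PosDef := by
  have hq : 0 ≤ 1 - q ^ 2 := by nlinarith
  have hgg : 0 ≤ g ⬝ᵥ A *ᵥ g := hA.posSemidef.dotProduct_mulVec_nonneg g
  refine (hA.smul (by positivity)).add_posSemidef (PosSemidef.smul ?_ (by positivity))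
  exact posSemidef_vecMulVec_self_star (A *ᵥ g)

lemma mulVec_eq [DecidableEq ι] (A : Matrix ι ι ℝ) (q : ℝ) (g u : ι → ℝ) :
    reflectionPreconditioner A q g *ᵥ u =
      A *ᵥ ((1 + q)⁻¹ • u +
        (2 * q / (1 - q ^ 2) * (A.toBilin' u g / A.toBilin' g g)) • g) := by
  rw [reflectionPreconditioner, add_mulVec, smul_mulVec, smul_mulVec, vecMulVec_mulVec,
    op_smul_eq_smul, smul_smul, mulVec_add, mulVec_smul, mulVec_smul,
    dotProduct_comm _ u, toBilin'_apply', toBilin'_apply', div_mul_eq_mul_div, mul_div_assoc]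

lemma mulVec_dotProduct_self [DecidableEq ι] (A : Matrix ι ι ℝ) (q : ℝ) (g u : ι → ℝ) :
    (reflectionPreconditioner A q g *ᵥ u) ⬝ᵥ u =
      (1 + q)⁻¹ * A.toBilin' u u +
        2 * q / (1 - q ^ 2) * (A.toBilin' u g ^ 2 / A.toBilin' g g) := by
  rw [mulVec_eq, dotProduct_comm, ← toBilin'_apply', map_add, map_smul, map_smul, smul_eq_mul,
    smul_eq_mul]
  ring

lemma mul_mulVec_dotProduct_self_le (hA : A.PosSemidef) (hq₀ : 0 ≤ q) (hq₁ : q < 1)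
    (g u : ι → ℝ) :
    (1 - q) * ((reflectionPreconditioner A q g *ᵥ u) ⬝ᵥ u) ≤ (A *ᵥ u) ⬝ᵥ u := by
  classical
  have hq : 0 < 1 - q := sub_pos.2 hq₁
  have hcs : A.toBilin' u g ^ 2 / A.toBilin' g g ≤ A.toBilin' u u :=
    div_le_of_le_mul₀ (toBilin'_self_nonneg hA g) (toBilin'_self_nonneg hA u)
      (LinearMap.BilinForm.apply_sq_le_of_symm _ (toBilin'_self_nonneg hA)
        (LinearMap.BilinForm.isSymm_iff.1 (isSymm_toBilin' hA.isHermitian)) u g)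
  calc (1 - q) * ((reflectionPreconditioner A q g *ᵥ u) ⬝ᵥ u)
      = (1 - q) / (1 + q) * A.toBilin' u u +
          2 * q / (1 + q) * (A.toBilin' u g ^ 2 / A.toBilin' g g) := by
        rw [mulVec_dotProduct_self, show 1 - q ^ 2 = (1 - q) * (1 + q) by ring]
        field_simp
    _ ≤ (1 - q) / (1 + q) * A.toBilin' u u + 2 * q / (1 + q) * A.toBilin' u u := by gcongr
    _ = (A *ᵥ u) ⬝ᵥ u := by
        rw [mulVec_dotProduct_eq_toBilin']
        field_simp
        ring

lemma mulVec_dotProduct_self_le_mul (hA : A.PosSemidef) (hq₀ : 0 ≤ q) (hq₁ : q < 1)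
    (g u : ι → ℝ) :
    (A *ᵥ u) ⬝ᵥ u ≤ (1 + q) * ((reflectionPreconditioner A q g *ᵥ u) ⬝ᵥ u) := by
  classical
  have hq : 0 ≤ 1 - q ^ 2 := by nlinarith
  have hgg : 0 ≤ A.toBilin' g g := toBilin'_self_nonneg hA g
  rw [mulVec_dotProduct_self, mulVec_dotProduct_eq_toBilin', mul_add,
    mul_inv_cancel_left₀ (by positivity)]
  exact le_add_of_nonneg_right (by positivity)

/-- The vector `q • v + w` bisects `v` and `w / q`, which have equal `A`-norm, so the reflection
fixing its span swaps `q • v` and `w`. -/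
lemma mulVec_sub_eq [DecidableEq ι] (hA : A.PosDef) (hq₀ : 0 ≤ q) (hq₁ : q < 1) {v w : ι → ℝ}
    (hvw : A.toBilin' w w = q ^ 2 * A.toBilin' v v) :
    reflectionPreconditioner A q (q • v + w) *ᵥ (v - w) = A *ᵥ v := by
  set g := q • v + w with hg
  have hq : 0 < 1 - q := sub_pos.2 hq₁
  have hprojection : 2 * q * A.toBilin' (v - w) g = (1 - q) * A.toBilin' g g := by
    simp only [hg, map_add, map_sub, map_smul, LinearMap.add_apply, LinearMap.sub_apply,
      LinearMap.smul_apply, smul_eq_mul, (isSymm_toBilin' hA.isHermitian).eq w v, hvw]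
    ring
  have hrank_one : (2 * q / (1 - q ^ 2) * (A.toBilin' (v - w) g / A.toBilin' g g)) • g =
      (1 + q)⁻¹ • g := by
    rcases eq_or_ne g 0 with hg₀ | hg₀
    · rw [hg₀, smul_zero, smul_zero]
    have hgg : A.toBilin' g g ≠ 0 := (posDef_toBilin' hA g hg₀).ne'
    rw [div_mul_div_comm, hprojection, mul_div_mul_right _ _ hgg,
      show 1 - q ^ 2 = (1 - q) * (1 + q) by ring, div_mul_cancel_left₀ hq.ne']
  rw [mulVec_eq, hrank_one, ← smul_add, show v - w + g = (1 + q) • v by rw [hg]; module,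
    inv_smul_smul₀ (by positivity)]

end reflectionPreconditioner

variable [DecidableEq ι]

/-- The iterates `x`, residuals `r`, preconditioned residuals `s`, search directions `p` and errors
`e` of the preconditioned conjugate gradient method for `A x = b` with variable preconditioners
`B k`. Step `k` is orthogonalized against the directions of an arbitrary finite set `J k` of
earlier steps; the truncated method is the case `J k = {k - m k, …, k - 1}`. -/
structure IsPCGRun (A : Matrix ι ι ℝ) (B : ℕ → Matrix ι ι ℝ) (b : ι → ℝ) (J : ℕ → Finset ℕ)
    (x r s p e : ℕ → ι → ℝ) : Prop where
  lt_of_mem : ∀ k, ∀ l ∈ J k, l < k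
  residual : ∀ k, r k = b - A *ᵥ x k
  preconditioned : ∀ k, s k = (B k)⁻¹ *ᵥ r k
  direction : ∀ k, p k = s k - ∑ l ∈ J k,
    (((A *ᵥ s k) ⬝ᵥ p l) / ((A *ᵥ p l) ⬝ᵥ p l)) • p l
  iterate : ∀ k, x (k + 1) = x k + ((r k ⬝ᵥ p k) / ((A *ᵥ p k) ⬝ᵥ p k)) • p k
  error : ∀ k, e k = A⁻¹ *ᵥ b - x k

namespace IsPCGRun

variable {A : Matrix ι ι ℝ} {B : ℕ → Matrix ι ι ℝ} {b : ι → ℝ} {J : ℕ → Finset ℕ}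
  {x r s p e E : ℕ → ι → ℝ} {K : ℕ}

lemma residual_eq_mulVec_error (h : IsPCGRun A B b J x r s p e) (hA : IsUnit A) (k : ℕ) :
    r k = A *ᵥ e k := by
  rw [h.residual, h.error, mulVec_sub, mulVec_mulVec,
    mul_nonsing_inv _ ((isUnit_iff_isUnit_det A).1 hA), one_mulVec]

lemma error_succ (h : IsPCGRun A B b J x r s p e) (k : ℕ) :
    e (k + 1) = e k - ((r k ⬝ᵥ p k) / ((A *ᵥ p k) ⬝ᵥ p k)) • p k := by
  rw [h.error, h.error, h.iterate, sub_add_eq_sub_sub]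

lemma preconditioned_eq (h : IsPCGRun A B b J x r s p e) (hA : IsUnit A) {k : ℕ}
    (hB : IsUnit (B k)) {d : ι → ℝ} (hd : B k *ᵥ d = A *ᵥ e k) : s k = d := by
  rw [h.preconditioned, h.residual_eq_mulVec_error hA, ← hd, mulVec_mulVec,
    nonsing_inv_mul _ ((isUnit_iff_isUnit_det _).1 hB), one_mulVec]

lemma direction_eq_preconditioned (h : IsPCGRun A B b J x r s p e) {k : ℕ}
    (horth : ∀ l < k, A.toBilin' (p l) (s k) = 0) : p k = s k := by
  rw [h.direction, Finset.sum_eq_zero, sub_zero]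
  intro l hl
  rw [mulVec_dotProduct_eq_toBilin', horth l (h.lt_of_mem k l hl), zero_div, zero_smul]

lemma error_succ_eq (h : IsPCGRun A B b J x r s p e) (hA : A.PosDef) {k : ℕ}
    (horth : A.toBilin' (p k) (e k - p k) = 0) : e (k + 1) = e k - p k := by
  rw [h.error_succ, h.residual_eq_mulVec_error hA.isUnit, mulVec_dotProduct_eq_toBilin',
    mulVec_dotProduct_eq_toBilin',
    div_smul_eq_self_of_apply_sub_eq_zero (posDef_toBilin' hA).anisotropic horth]

theorem error_eq_and_directions_eq (h : IsPCGRun A B b J x r s p e) (hA : A.PosDef)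
    (hB : ∀ k, IsUnit (B k)) (hE : IsOrthogonalDescent A.toBilin' K E)
    (hBE : ∀ k < K, B k *ᵥ (E k - E (k + 1)) = A *ᵥ E k) (h₀ : e 0 = E 0) {k : ℕ} (hk : k ≤ K) :
    e k = E k ∧ ∀ l < k, s l = E l - E (l + 1) ∧ p l = s l := by
  induction k with
  | zero => exact ⟨h₀, fun l hl ↦ absurd hl l.not_lt_zero⟩
  | succ k ih =>
    obtain ⟨hek, hprev⟩ := ih (Nat.le_of_succ_le hk)
    have hs : s k = E k - E (k + 1) :=
      h.preconditioned_eq hA.isUnit (hB k) (by rw [hBE k hk, hek])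
    have hp : p k = s k := h.direction_eq_preconditioned fun l hl ↦ by
      rw [(hprev l hl).2, (hprev l hl).1, hs, hE.apply_increment_increment hl hk]
    have hnext : e k - p k = E (k + 1) := by rw [hp, hs, hek, sub_sub_cancel]
    have he : e (k + 1) = e k - p k :=
      h.error_succ_eq hA (by rw [hnext, hp, hs, hE.apply_increment_succ hk])
    refine ⟨he.trans hnext, fun l hl ↦ ?_⟩
    rcases Nat.lt_succ_iff_lt_or_eq.1 hl with hl | rfl
    · exact hprev l hl
    · exact ⟨hs, hp⟩

end IsPCGRun

end Preconditioning

lemma one_add_div_one_sub_eq {κ : ℝ} (hκ : 0 < κ) :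
    (1 + (κ - 1) / (κ + 1)) / (1 - (κ - 1) / (κ + 1)) = κ := by
  have hκ₁ : κ + 1 ≠ 0 := by positivity
  rw [one_add_div hκ₁, one_sub_div hκ₁, div_div_div_cancel_right₀ hκ₁]
  ring

lemma sqrt_sq_mul_div_sqrt {q c : ℝ} (hq : 0 ≤ q) (hc : 0 < c) : √(q ^ 2 * c) / √c = q := by
  rw [Real.sqrt_mul (sq_nonneg q), Real.sqrt_sq hq,
    mul_div_cancel_right₀ _ (Real.sqrt_pos.2 hc).ne']

theorem pcg_bound_sharp_general {ι : Type*} [Fintype ι] [DecidableEq ι] {A : Matrix ι ι ℝ}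
    (hA : A.PosDef) (b x₀ : ι → ℝ) (hx₀ : x₀ ≠ A⁻¹ *ᵥ b) {κmax : ℝ} (hκ : 1 < κmax) (K : ℕ)
    (hK : K < Fintype.card ι) :
    ∃ B : ℕ → Matrix ι ι ℝ,
      (∀ k, (B k).PosDef) ∧
      (∀ k < K, ∃ a c : ℝ, 0 < a ∧ a ≤ c ∧ c / a ≤ κmax ∧
        (∀ u : ι → ℝ, a * ((B k *ᵥ u) ⬝ᵥ u) ≤ (A *ᵥ u) ⬝ᵥ u) ∧
        (∀ u : ι → ℝ, (A *ᵥ u) ⬝ᵥ u ≤ c * ((B k *ᵥ u) ⬝ᵥ u))) ∧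
      ∀ (J : ℕ → Finset ℕ) (x r s p e : ℕ → ι → ℝ), x 0 = x₀ → IsPCGRun A B b J x r s p e →
        ∀ k < K, p k = s k ∧
          √((A *ᵥ e (k + 1)) ⬝ᵥ e (k + 1)) / √((A *ᵥ e k) ⬝ᵥ e k) =
            (κmax - 1) / (κmax + 1) := by
  have hqκ := one_add_div_one_sub_eq (zero_lt_one.trans hκ)
  set q := (κmax - 1) / (κmax + 1)
  have hq₀ : 0 < q := div_pos (by linarith) (by linarith)
  have hq₁ : q < 1 := (div_lt_one (by linarith)).2 (by linarith)
  obtain ⟨E, hE₀, hE, hpos, hnorm⟩ := exists_geometric_isOrthogonalDescent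
    (isSymm_toBilin' hA.isHermitian) (posDef_toBilin' hA) (sub_ne_zero.2 hx₀.symm) hq₀ hq₁.le
    (by rwa [Module.finrank_fintype_fun_eq_card])
  let B (k : ℕ) := reflectionPreconditioner A q (q • E k + E (k + 1))
  have hB (k : ℕ) : (B k).PosDef := reflectionPreconditioner.posDef hA hq₀.le hq₁ _
  have hBE : ∀ k < K, B k *ᵥ (E k - E (k + 1)) = A *ᵥ E k := fun k hk ↦
    reflectionPreconditioner.mulVec_sub_eq hA hq₀.le hq₁ (hnorm k hk)
  refine ⟨B, hB, fun k _ ↦ ⟨1 - q, 1 + q, by linarith, by linarith, hqκ.le,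
    reflectionPreconditioner.mul_mulVec_dotProduct_self_le hA.posSemidef hq₀.le hq₁ _,
    reflectionPreconditioner.mulVec_dotProduct_self_le_mul hA.posSemidef hq₀.le hq₁ _⟩,
    fun J x r s p e hx hrun k hk ↦ ?_⟩
  have he₀E : e 0 = E 0 := by rw [hrun.error, hx, hE₀]
  obtain ⟨hek, -⟩ :=
    hrun.error_eq_and_directions_eq hA (fun k ↦ (hB k).isUnit) hE hBE he₀E hk.le
  obtain ⟨hek_succ, hdir⟩ :=
    hrun.error_eq_and_directions_eq hA (fun k ↦ (hB k).isUnit) hE hBE he₀E hk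
  refine ⟨(hdir k k.lt_succ_self).2, ?_⟩
  rw [hek_succ, hek, mulVec_dotProduct_eq_toBilin', mulVec_dotProduct_eq_toBilin',
    hnorm k hk, sqrt_sq_mul_div_sqrt hq₀.le (hpos k hk.le)]

/-- The convergence rate bound for the method with variable
preconditioning is sharp: for any SPD `A`, `b`, `x 0 ≠ x* = A⁻¹ b`, `κmax > 1`, and number
of iterations `K < n`, there exist SPD preconditioners `B 0, …, B (K−1)`, each with
`κ(B_k⁻¹ A) ≤ κmax`, such that for every admissible choice of `m` the method turns into the
preconditioned steepest descent method (`p k = s k`) and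
`‖e (k+1)‖_A / ‖e k‖_A = (κmax − 1)/(κmax + 1)` for every `k < K`. -/
theorem pcg_bound_sharp
    {n : ℕ} (A : Matrix (Fin n) (Fin n) ℝ) (hA : A.PosDef)
    (b x0 : Fin n → ℝ) (hx0 : x0 ≠ A⁻¹ *ᵥ b)
    (κmax : ℝ) (hκ : 1 < κmax) (K : ℕ) (hK : K < n) :
    ∃ B : ℕ → Matrix (Fin n) (Fin n) ℝ,
      (∀ k, (B k).PosDef) ∧
      (∀ k < K, ∃ a c : ℝ, 0 < a ∧ a ≤ c ∧ c / a ≤ κmax ∧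
        (∀ u : Fin n → ℝ, a * ((B k *ᵥ u) ⬝ᵥ u) ≤ (A *ᵥ u) ⬝ᵥ u) ∧
        (∀ u : Fin n → ℝ, (A *ᵥ u) ⬝ᵥ u ≤ c * ((B k *ᵥ u) ⬝ᵥ u))) ∧
      ∀ m : ℕ → ℕ, m 0 = 0 → (∀ k, m k ≤ k) → (∀ k, m (k + 1) ≤ m k + 1) →
      ∀ x r s p e : ℕ → Fin n → ℝ,
        x 0 = x0 →
        (∀ k, r k = b - A *ᵥ x k) →
        (∀ k, s k = (B k)⁻¹ *ᵥ r k) →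
        (∀ k, p k = s k - ∑ l ∈ Finset.Ico (k - m k) k,
            (((A *ᵥ s k) ⬝ᵥ p l) / ((A *ᵥ p l) ⬝ᵥ p l)) • p l) →
        (∀ k, x (k + 1) = x k + ((r k ⬝ᵥ p k) / ((A *ᵥ p k) ⬝ᵥ p k)) • p k) →
        (∀ k, e k = A⁻¹ *ᵥ b - x k) →
        ∀ k < K, p k = s k ∧
          anorm A (e (k + 1)) / anorm A (e k) = (κmax - 1) / (κmax + 1) := by
  obtain ⟨B, hB, hBA, hrun⟩ := pcg_bound_sharp_general hA b x0 hx0 hκ K (by simpa using hK)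
  exact ⟨B, hB, hBA, fun m _ _ _ x r s p e hx hr hs hp hxs he ↦
    hrun (fun k ↦ Finset.Ico (k - m k) k) x r s p e hx
      ⟨fun _ _ hl ↦ (Finset.mem_Ico.1 hl).2, hr, hs, hp, hxs, he⟩⟩
end

section
/- The convergence rate bound is sharp in the complex Hermitian case: let A be an n×n complex Hermitian positive definite matrix, b ∈ ℂⁿ, x₀ ∈ ℂⁿ with x₀ ≠ x* = A⁻¹b, let κmax > 1, and let K be a number of iterations with K < n. Then there exist complex Hermitian positive definite matrices B₀, …, B_{K−1}, each satisfying κ(B_k⁻¹A) ≤ κmax (i.e., there exist 0 < a_k ≤ b_k with b_k/a_k ≤ κmax and a_k⟨B_k u, u⟩ ≤ ⟨A u, u⟩ ≤ b_k⟨B_k u, u⟩ for all u ∈ ℂⁿ), such that for every admissible choice of the integers m_k (0 ≤ m_k ≤ k, m_{k+1} ≤ m_k + 1) the method produces p_k = s_k for every k < K (i.e., it turns into the preconditioned steepest descent method) and ‖e_{k+1}‖_A / ‖e_k‖_A = (κmax − 1)/(κmax + 1) for every k < K. -/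
open Matrix
open scoped ComplexOrder

/-- The `A`-norm `‖x‖_A = √(re ⟨A x, x⟩)` for a Hermitian positive definite `A`,
with `⟨x,y⟩ = Σ conj(xᵢ) yᵢ` the standard Hermitian inner product on `ℂⁿ`. -/
noncomputable def anormC {n : ℕ} (A : Matrix (Fin n) (Fin n) ℂ) (x : Fin n → ℂ) : ℝ :=
  Real.sqrt ((star (A *ᵥ x) ⬝ᵥ x).re)

/-!
Put `ρ = (κ - 1) / (κ + 1)` and let `e₀` be the initial error. As long as the dimension permits,
vectors `f 0 = e₀, f 1, …` can be chosen with `⟨f k, f l⟩_A = ρ ^ (2 * l) * ‖e₀‖_A ^ 2` for `k ≤ l`: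
their norms decay exactly by the factor `ρ`, and the steps `f k - f (k + 1)` are pairwise
`A`-orthogonal. A symmetric rank-one secant update of `A` turns a multiple of `f k - f (k + 1)` into
the preconditioned residual of the error `f k`, at the price of a condition number of exactly `κ`,
and steepest descent then moves the error from `f k` to `f (k + 1)`. Since these directions are
`A`-orthogonal already, orthogonalizing against earlier ones changes nothing.
-/

variable {ι 𝕜 : Type*} [Fintype ι]

section Method

variable [Field 𝕜] [StarRing 𝕜]

/-- The `A`-inner product `⟨A x, y⟩ = Σ conj ((A x) i) * y i`, conjugate-linear in `x`. -/
def energyInner (A : Matrix ι ι 𝕜) (x y : ι → 𝕜) : 𝕜 :=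
  star (A *ᵥ x) ⬝ᵥ y

/-- The preconditioned conjugate gradient iteration for `A x = b` with variable preconditioners
`B k`: iterates `x`, residuals `r`, preconditioned residuals `s`, search directions `p`. The
direction `p k` is `A`-orthogonalized against the `p l` with `l ∈ S k`; the method with truncation
parameters `m` has `S k = {k - m k, …, k - 1}`. -/
structure IsTruncatedPCG [DecidableEq ι] (A : Matrix ι ι 𝕜) (B : ℕ → Matrix ι ι 𝕜) (b : ι → 𝕜)
    (S : ℕ → Finset ℕ) (x r s p : ℕ → ι → 𝕜) : Prop where
  residual : ∀ k, r k = b - A *ᵥ x k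
  preconditioned : ∀ k, s k = (B k)⁻¹ *ᵥ r k
  direction : ∀ k, p k =
    s k - ∑ l ∈ S k, (energyInner A (s k) (p l) / energyInner A (p l) (p l)) • p l
  iterate : ∀ k, x (k + 1) = x k + ((star (r k) ⬝ᵥ p k) / energyInner A (p k) (p k)) • p k

variable {A : Matrix ι ι 𝕜} {x y z : ι → 𝕜}

lemma energyInner_sub_left : energyInner A (x - y) z = energyInner A x z - energyInner A y z := by
  simp [energyInner, mulVec_sub, sub_dotProduct]

lemma energyInner_sub_right : energyInner A x (y - z) = energyInner A x y - energyInner A x z :=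
  dotProduct_sub ..

lemma energyInner_smul_left (c : 𝕜) : energyInner A (c • x) y = star c * energyInner A x y := by
  simp [energyInner, mulVec_smul]

lemma energyInner_smul_right (c : 𝕜) : energyInner A x (c • y) = c * energyInner A x y :=
  dotProduct_smul ..

theorem IsTruncatedPCG.eq_steepestDescent [DecidableEq ι] {B : ℕ → Matrix ι ι 𝕜} {b : ι → 𝕜}
    {S : ℕ → Finset ℕ} {x r s p f v : ℕ → ι → 𝕜} {K : ℕ} (h : IsTruncatedPCG A B b S x r s p)
    (hA : IsUnit A) (hB : ∀ k, IsUnit (B k)) (hS : ∀ k, ∀ l ∈ S k, l < k)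
    (hf₀ : f 0 = A⁻¹ *ᵥ b - x 0) (hv : ∀ k < K, B k *ᵥ v k = A *ᵥ f k)
    (hf : ∀ k < K, f (k + 1) =
      f k - (energyInner A (f k) (v k) / energyInner A (v k) (v k)) • v k)
    (hvv : ∀ k < K, ∀ l < k, energyInner A (v k) (v l) = 0) :
    (∀ k ≤ K, A⁻¹ *ᵥ b - x k = f k) ∧ ∀ k < K, s k = v k ∧ p k = v k := by
  have residual_eq {k : ℕ} (hk : A⁻¹ *ᵥ b - x k = f k) : r k = A *ᵥ f k := by
    rw [h.residual, ← hk, mulVec_sub, mulVec_mulVec,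
      mul_nonsing_inv _ ((isUnit_iff_isUnit_det _).mp hA), one_mulVec]
  have direction_eq {k : ℕ} (hkK : k < K) (hk : A⁻¹ *ᵥ b - x k = f k)
      (hp : ∀ l < k, p l = v l) : s k = v k ∧ p k = v k := by
    have hs : s k = v k := by
      rw [h.preconditioned, residual_eq hk, ← hv k hkK, mulVec_mulVec,
        nonsing_inv_mul _ ((isUnit_iff_isUnit_det _).mp (hB k)), one_mulVec]
    refine ⟨hs, ?_⟩
    rw [h.direction, hs, Finset.sum_eq_zero, sub_zero]
    intro l hl
    rw [hp l (hS k l hl), hvv k hkK l (hS k l hl), zero_div, zero_smul]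
  have main (k : ℕ) (hk : k ≤ K) :
      A⁻¹ *ᵥ b - x k = f k ∧ ∀ l < k, s l = v l ∧ p l = v l := by
    induction k with
    | zero => exact ⟨hf₀.symm, fun l hl => absurd hl l.not_lt_zero⟩
    | succ k ih =>
      obtain ⟨herr, hdir⟩ := ih (by omega)
      have hk' := direction_eq hk herr fun l hl => (hdir l hl).2
      refine ⟨?_, fun l hl => ?_⟩
      · rw [h.iterate, hk'.2, residual_eq herr, ← sub_sub, herr, hf k hk, energyInner]
        rfl
      · obtain hlt | rfl := Nat.lt_succ_iff_lt_or_eq.mp hl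
        exacts [hdir l hlt, hk']
  exact ⟨fun k hk => (main k hk).1, fun k hk => (main (k + 1) hk).2 k k.lt_succ_self⟩

end Method

variable [RCLike 𝕜]

section OrthogonalSteps

variable {V : Type*} [NormedAddCommGroup V] [InnerProductSpace 𝕜 V]

lemma exists_norm_eq_one_forall_mem_inner_eq_zero (s : Finset V)
    (hs : s.card < Module.finrank 𝕜 V) : ∃ u : V, ‖u‖ = 1 ∧ ∀ v ∈ s, inner 𝕜 v u = 0 := by
  have hspan : (Submodule.span 𝕜 (s : Set V))ᗮ ≠ ⊥ := by
    rw [Ne, Submodule.orthogonal_eq_bot_iff]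
    exact (span_lt_top_of_card_lt_finrank (by simpa using hs)).ne
  obtain ⟨w, hw, hw₀⟩ := Submodule.exists_mem_ne_zero_of_ne_bot hspan
  refine ⟨((‖w‖⁻¹ : ℝ) : 𝕜) • w, by simp [norm_smul, hw₀], fun v hv => ?_⟩
  rw [inner_smul_right, hw v (Submodule.subset_span hv), mul_zero]

lemma exists_inner_eq_mul_inner {s : Finset V} (hs : s.card < Module.finrank 𝕜 V) {e : V}
    (he : e ∈ s) {t : ℝ} (ht₀ : 0 ≤ t) (ht₁ : t ≤ 1) :
    ∃ g : V, (∀ v ∈ s, inner 𝕜 v g = t * inner 𝕜 v e) ∧ inner 𝕜 g g = t * inner 𝕜 e e := by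
  obtain ⟨u, hu, hsu⟩ := exists_norm_eq_one_forall_mem_inner_eq_zero (𝕜 := 𝕜) s hs
  set c : ℝ := √(t * (1 - t)) * ‖e‖ with hc
  have hc_sq : c ^ 2 = t * (1 - t) * ‖e‖ ^ 2 := by
    rw [hc, mul_pow, Real.sq_sqrt (mul_nonneg ht₀ (sub_nonneg.mpr ht₁))]
  refine ⟨(t : 𝕜) • e + (c : 𝕜) • u, fun v hv => ?_, ?_⟩
  · rw [inner_add_right, inner_smul_right, inner_smul_right, hsu v hv, mul_zero, add_zero]
  · have horth : inner 𝕜 ((t : 𝕜) • e) ((c : 𝕜) • u) = 0 := by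
      rw [inner_smul_left, inner_smul_right, hsu e he, mul_zero, mul_zero]
    have hnorm : ‖(t : 𝕜) • e + (c : 𝕜) • u‖ ^ 2 = t * ‖e‖ ^ 2 := by
      rw [sq, norm_add_sq_eq_norm_sq_add_norm_sq_of_inner_eq_zero _ _ horth, ← sq, ← sq,
        norm_smul, norm_smul, hu, mul_pow, mul_pow, RCLike.norm_ofReal, RCLike.norm_ofReal,
        sq_abs, sq_abs, hc_sq]
      ring
    rw [inner_self_eq_norm_sq_to_K, inner_self_eq_norm_sq_to_K]
    exact_mod_cast hnorm

/-- The Gram matrix says that the steps `f k - f (k + 1)` are pairwise orthogonal while the norms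
of the `f k` decay exactly geometrically. -/
theorem exists_inner_eq_pow_mul_norm_sq (e : V) {ρ : ℝ} (hρ : ρ ^ 2 ≤ 1) {K : ℕ}
    (hK : K < Module.finrank 𝕜 V) : ∃ f : ℕ → V, f 0 = e ∧
      ∀ k l, k ≤ l → l ≤ K → inner 𝕜 (f k) (f l) = ((ρ ^ (2 * l) * ‖e‖ ^ 2 : ℝ) : 𝕜) := by
  classical
  induction K with
  | zero =>
    refine ⟨fun _ => e, rfl, fun k l _ hl => ?_⟩
    rw [Nat.le_zero.mp hl, inner_self_eq_norm_sq_to_K]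
    simp
  | succ K ih =>
    obtain ⟨f, hf₀, hf⟩ := ih (by omega)
    have mem_image (k : ℕ) (hk : k ≤ K) : f k ∈ (Finset.range (K + 1)).image f :=
      Finset.mem_image_of_mem f (Finset.mem_range_succ_iff.mpr hk)
    obtain ⟨g, hfg, hgg⟩ := exists_inner_eq_mul_inner (𝕜 := 𝕜)
      ((Finset.card_image_le.trans_eq (Finset.card_range _)).trans_lt hK)
      (mem_image K le_rfl) (sq_nonneg ρ) hρ
    have hscale : ((ρ ^ 2 : ℝ) : 𝕜) * ((ρ ^ (2 * K) * ‖e‖ ^ 2 : ℝ) : 𝕜) =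
        ((ρ ^ (2 * (K + 1)) * ‖e‖ ^ 2 : ℝ) : 𝕜) := by
      push_cast
      ring
    refine ⟨Function.update f (K + 1) g, by simp [hf₀], fun k l hkl hl => ?_⟩
    rcases hl.lt_or_eq with hl | rfl
    · rw [Function.update_of_ne (by omega), Function.update_of_ne (by omega)]
      exact hf k l hkl (by omega)
    · rw [Function.update_self, ← hscale]
      rcases hkl.lt_or_eq with hk | rfl
      · have hkK : k ≤ K := by omega
        rw [Function.update_of_ne hk.ne, hfg _ (mem_image k hkK), hf k K hkK le_rfl]
      · rw [Function.update_self, hgg, hf K K le_rfl le_rfl]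

end OrthogonalSteps

section EnergyNorm

/-- The `A`-norm `‖x‖_A = √⟨A x, x⟩`. -/
noncomputable def energyNorm (A : Matrix ι ι 𝕜) (x : ι → 𝕜) : ℝ :=
  √(RCLike.re (energyInner A x x))

variable {A : Matrix ι ι 𝕜}

open scoped MatrixOrder in
theorem exists_linearEquiv_inner_eq_energyInner (hA : A.PosDef) :
    ∃ Φ : (ι → 𝕜) ≃ₗ[𝕜] EuclideanSpace 𝕜 ι, ∀ x y, inner 𝕜 (Φ x) (Φ y) = energyInner A x y := by
  classical
  obtain ⟨C, hC, hCA⟩ :=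
    CStarAlgebra.isStrictlyPositive_iff_eq_star_mul_self.mp hA.isStrictlyPositive
  refine ⟨(toLinearEquiv' C hC.invertible).trans (WithLp.linearEquiv 2 𝕜 (ι → 𝕜)).symm,
    fun x y => ?_⟩
  change inner 𝕜 (WithLp.toLp 2 (C *ᵥ x)) (WithLp.toLp 2 (C *ᵥ y)) = _
  rw [EuclideanSpace.inner_toLp_toLp, dotProduct_comm, energyInner, hCA, star_eq_conjTranspose,
    ← mulVec_mulVec, star_mulVec Cᴴ, conjTranspose_conjTranspose, dotProduct_mulVec]

lemma star_energyInner (hA : A.PosDef) (x y : ι → 𝕜) :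
    star (energyInner A x y) = energyInner A y x := by
  obtain ⟨Φ, hΦ⟩ := exists_linearEquiv_inner_eq_energyInner hA
  rw [← hΦ, ← hΦ]
  exact inner_conj_symm ..

lemma energyInner_self (hA : A.PosDef) (x : ι → 𝕜) :
    energyInner A x x = ((energyNorm A x ^ 2 : ℝ) : 𝕜) := by
  obtain ⟨Φ, hΦ⟩ := exists_linearEquiv_inner_eq_energyInner hA
  rw [energyNorm, ← hΦ, ← norm_eq_sqrt_re_inner, inner_self_eq_norm_sq_to_K]
  push_cast
  rfl

lemma re_energyInner_self (hA : A.PosDef) (x : ι → 𝕜) :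
    RCLike.re (energyInner A x x) = energyNorm A x ^ 2 := by
  rw [energyInner_self hA, RCLike.ofReal_re]

lemma energyNorm_pos (hA : A.PosDef) {x : ι → 𝕜} (hx : x ≠ 0) : 0 < energyNorm A x := by
  obtain ⟨Φ, hΦ⟩ := exists_linearEquiv_inner_eq_energyInner hA
  rw [energyNorm, ← hΦ, ← norm_eq_sqrt_re_inner]
  exact norm_pos_iff.mpr (Φ.map_ne_zero_iff.mpr hx)

lemma norm_energyInner_le (hA : A.PosDef) (x y : ι → 𝕜) :
    ‖energyInner A x y‖ ≤ energyNorm A x * energyNorm A y := by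
  obtain ⟨Φ, hΦ⟩ := exists_linearEquiv_inner_eq_energyInner hA
  rw [energyNorm, energyNorm, ← hΦ, ← hΦ, ← hΦ, ← norm_eq_sqrt_re_inner, ← norm_eq_sqrt_re_inner]
  exact norm_inner_le_norm ..

theorem exists_energyNorm_eq_pow_mul (hA : A.PosDef) (e : ι → 𝕜) {ρ : ℝ} (hρ₀ : 0 ≤ ρ)
    (hρ₁ : ρ ≤ 1) {K : ℕ} (hK : K < Fintype.card ι) : ∃ f : ℕ → ι → 𝕜, f 0 = e ∧
      (∀ k ≤ K, energyNorm A (f k) = ρ ^ k * energyNorm A e) ∧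
      ∀ k l, k ≤ l → l ≤ K → energyInner A (f k) (f l) = ((energyNorm A (f l) ^ 2 : ℝ) : 𝕜) := by
  obtain ⟨Φ, hΦ⟩ := exists_linearEquiv_inner_eq_energyInner hA
  have hnorm (x : ι → 𝕜) : energyNorm A x = ‖Φ x‖ := by
    rw [energyNorm, ← hΦ, ← norm_eq_sqrt_re_inner]
  obtain ⟨f, hf₀, hf⟩ := exists_inner_eq_pow_mul_norm_sq (𝕜 := 𝕜) (Φ e) (pow_le_one₀ hρ₀ hρ₁)
    (hK.trans_eq finrank_euclideanSpace.symm)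
  have hfnorm (k : ℕ) (hk : k ≤ K) : ‖f k‖ = ρ ^ k * ‖Φ e‖ := by
    rw [norm_eq_sqrt_re_inner (𝕜 := 𝕜), hf k k le_rfl hk, RCLike.ofReal_re, mul_comm 2, pow_mul,
      ← mul_pow, Real.sqrt_sq (by positivity)]
  refine ⟨fun k => Φ.symm (f k), Φ.symm_apply_eq.mpr hf₀, fun k hk => ?_,
    fun k l hkl hl => ?_⟩
  · rw [hnorm, hnorm, Φ.apply_symm_apply, hfnorm k hk]
  · rw [← hΦ, hnorm, Φ.apply_symm_apply, Φ.apply_symm_apply, hf k l hkl hl, hfnorm l hl, mul_pow,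
      ← pow_mul, mul_comm l]

end EnergyNorm

section Preconditioner

/-- The condition number bound `κ(B⁻¹ A) ≤ κ`, encoded by the spectral equivalence
`a B ≤ A ≤ c B` of quadratic forms for some `0 < a ≤ c` with `c / a ≤ κ`. -/
def CondLE (A B : Matrix ι ι 𝕜) (κ : ℝ) : Prop :=
  ∃ a c : ℝ, 0 < a ∧ a ≤ c ∧ c / a ≤ κ ∧
    (∀ u, a * RCLike.re (energyInner B u u) ≤ RCLike.re (energyInner A u u)) ∧
    ∀ u, RCLike.re (energyInner A u u) ≤ c * RCLike.re (energyInner B u u)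

/-- The rank-one update `A + γ (A w) (A w)ᴴ` of `A`, the shape of the extremal preconditioners. -/
def rankOneUpdate (A : Matrix ι ι 𝕜) (γ : ℝ) (w : ι → 𝕜) : Matrix ι ι 𝕜 :=
  A + (γ : 𝕜) • vecMulVec (A *ᵥ w) (star (A *ᵥ w))

variable {A : Matrix ι ι 𝕜} {γ : ℝ} {f s : ι → 𝕜}

lemma rankOneUpdate_mulVec (A : Matrix ι ι 𝕜) (γ : ℝ) (w u : ι → 𝕜) :
    rankOneUpdate A γ w *ᵥ u = A *ᵥ (u + ((γ : 𝕜) * energyInner A w u) • w) := by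
  rw [rankOneUpdate, add_mulVec, smul_mulVec, vecMulVec_mulVec, mulVec_add, mulVec_smul, mul_smul,
    energyInner, op_smul_eq_smul]

lemma posDef_rankOneUpdate (hA : A.PosDef) (hγ : 0 ≤ γ) (w : ι → 𝕜) :
    (rankOneUpdate A γ w).PosDef :=
  hA.add_posSemidef ((posSemidef_vecMulVec_self_star _).smul (RCLike.ofReal_nonneg.mpr hγ))

lemma re_energyInner_rankOneUpdate_self (A : Matrix ι ι 𝕜) (γ : ℝ) (w u : ι → 𝕜) :
    RCLike.re (energyInner (rankOneUpdate A γ w) u u) =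
      RCLike.re (energyInner A u u) + γ * ‖energyInner A w u‖ ^ 2 := by
  have h : energyInner (rankOneUpdate A γ w) u u =
      energyInner A u u + ((γ * ‖energyInner A w u‖ ^ 2 : ℝ) : 𝕜) := by
    rw [energyInner, rankOneUpdate_mulVec, mulVec_add, mulVec_smul, star_add, star_smul,
      add_dotProduct, smul_dotProduct, smul_eq_mul, star_mul', ← energyInner, ← energyInner,
      mul_assoc, RCLike.star_def, RCLike.conj_mul, RCLike.conj_ofReal]
    push_cast
    rfl
  rw [h, map_add, RCLike.ofReal_re]

lemma condLE_rankOneUpdate (hA : A.PosDef) (hγ : 0 ≤ γ) (w : ι → 𝕜) :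
    CondLE A (rankOneUpdate A γ w) (1 + γ * energyNorm A w ^ 2) := by
  have hκ : 1 ≤ 1 + γ * energyNorm A w ^ 2 := le_add_of_nonneg_right (by positivity)
  refine ⟨1 / (1 + γ * energyNorm A w ^ 2), 1, by positivity,
    div_le_one_of_le₀ hκ (by positivity), by rw [one_div_one_div], fun u => ?_, fun u => ?_⟩
  · have hcs : ‖energyInner A w u‖ ^ 2 ≤ (energyNorm A w * energyNorm A u) ^ 2 := by
      gcongr
      exact norm_energyInner_le hA w u
    rw [one_div_mul_eq_div, div_le_iff₀ (by positivity), re_energyInner_rankOneUpdate_self,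
      re_energyInner_self hA]
    linarith [mul_le_mul_of_nonneg_left hcs hγ]
  · rw [re_energyInner_rankOneUpdate_self, one_mul]
    exact le_add_of_nonneg_right (by positivity)

theorem exists_condLE_mulVec_eq (hA : A.PosDef) {τ : ℝ} (hτ : 0 < τ)
    (hs : energyInner A (f - s) s = (τ : 𝕜)) :
    ∃ B : Matrix ι ι 𝕜, B.PosDef ∧ CondLE A B (1 + τ⁻¹ * energyNorm A (f - s) ^ 2) ∧
      B *ᵥ s = A *ᵥ f := by
  have hγ : 0 ≤ τ⁻¹ := by positivity
  refine ⟨rankOneUpdate A τ⁻¹ (f - s), posDef_rankOneUpdate hA hγ _,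
    condLE_rankOneUpdate hA hγ _, ?_⟩
  rw [rankOneUpdate_mulVec, hs, ← RCLike.ofReal_mul, inv_mul_cancel₀ hτ.ne', RCLike.ofReal_one,
    one_smul, add_sub_cancel]

end Preconditioner

section ExtremalStep

/-- The position of a preconditioned residual `s` relative to the error `f` for which a steepest
descent step with condition number `κ` is slowest: the case of equality in the Kantorovich
inequality, with `s` scaled so that the preconditioner satisfies `A ≤ B ≤ κ A`. -/
structure IsExtremalStep (A : Matrix ι ι 𝕜) (κ : ℝ) (f s : ι → 𝕜) : Prop where
  error_direction : energyInner A f s = ((2 / (κ + 1) * energyNorm A f ^ 2 : ℝ) : 𝕜)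
  direction_self : energyInner A s s = ((energyNorm A f ^ 2 / κ : ℝ) : 𝕜)

variable {A : Matrix ι ι 𝕜} {κ : ℝ} {f g s : ι → 𝕜}

lemma isExtremalStep_smul_sub (hA : A.PosDef) (hκ : 0 < κ)
    (hfg : energyInner A f g = ((energyNorm A g ^ 2 : ℝ) : 𝕜))
    (hg : energyNorm A g = (κ - 1) / (κ + 1) * energyNorm A f) :
    IsExtremalStep A κ f ((((κ + 1) / (2 * κ) : ℝ) : 𝕜) • (f - g)) := by
  have hgf : energyInner A g f = ((energyNorm A g ^ 2 : ℝ) : 𝕜) := by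
    rw [← star_energyInner hA, hfg, RCLike.star_def, RCLike.conj_ofReal]
  constructor
  · rw [energyInner_smul_right, energyInner_sub_right, energyInner_self hA, hfg, hg]
    norm_cast
    field_simp
    ring
  · rw [energyInner_smul_left, energyInner_smul_right, energyInner_sub_left,
      energyInner_sub_right, energyInner_sub_right, energyInner_self hA, energyInner_self hA, hfg,
      hgf, hg, RCLike.star_def, RCLike.conj_ofReal]
    norm_cast
    field_simp
    ring

namespace IsExtremalStep

lemma direction_error (hA : A.PosDef) (h : IsExtremalStep A κ f s) :
    energyInner A s f = ((2 / (κ + 1) * energyNorm A f ^ 2 : ℝ) : 𝕜) := by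
  rw [← star_energyInner hA, h.error_direction, RCLike.star_def, RCLike.conj_ofReal]

lemma stepLength (hA : A.PosDef) (hκ : 0 < κ) (hf : f ≠ 0) (h : IsExtremalStep A κ f s) :
    energyInner A f s / energyInner A s s = ((2 * κ / (κ + 1) : ℝ) : 𝕜) := by
  have := (energyNorm_pos hA hf).ne'
  rw [h.error_direction, h.direction_self]
  norm_cast
  field_simp

lemma energyNorm_sub_sq (hA : A.PosDef) (h : IsExtremalStep A κ f s) :
    energyNorm A (f - s) ^ 2 = (1 - 4 / (κ + 1) + 1 / κ) * energyNorm A f ^ 2 := by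
  apply RCLike.ofReal_injective (K := 𝕜)
  rw [← energyInner_self hA, energyInner_sub_left, energyInner_sub_right, energyInner_sub_right,
    h.error_direction, h.direction_error hA, h.direction_self, energyInner_self hA]
  norm_cast
  ring

theorem exists_preconditioner (hA : A.PosDef) (hκ : 1 < κ) (hf : f ≠ 0)
    (h : IsExtremalStep A κ f s) :
    ∃ B : Matrix ι ι 𝕜, B.PosDef ∧ CondLE A B κ ∧ B *ᵥ s = A *ᵥ f := by
  have hf₀ := energyNorm_pos hA hf
  have hκ₀ : 0 < κ - 1 := by linarith
  set τ : ℝ := (κ - 1) / (κ * (κ + 1)) * energyNorm A f ^ 2 with hτ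
  have hs : energyInner A (f - s) s = (τ : 𝕜) := by
    rw [energyInner_sub_left, h.error_direction, h.direction_self]
    norm_cast
    rw [hτ]
    field_simp
    ring
  have hcond : 1 + τ⁻¹ * energyNorm A (f - s) ^ 2 = κ := by
    rw [h.energyNorm_sub_sq hA, hτ]
    field_simp
    ring
  exact hcond ▸ exists_condLE_mulVec_eq hA (by positivity) hs

end IsExtremalStep

theorem exists_isExtremalStep_sequence (hA : A.PosDef) (hκ : 1 < κ) (e : ι → 𝕜) {K : ℕ}
    (hK : K < Fintype.card ι) : ∃ f s : ℕ → ι → 𝕜, f 0 = e ∧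
      (∀ k ≤ K, energyNorm A (f k) = ((κ - 1) / (κ + 1)) ^ k * energyNorm A e) ∧
      (∀ k < K, IsExtremalStep A κ (f k) (s k)) ∧
      (∀ k, f (k + 1) = f k - ((2 * κ / (κ + 1) : ℝ) : 𝕜) • s k) ∧
      ∀ k < K, ∀ l < k, energyInner A (s k) (s l) = 0 := by
  have hκ₀ : 0 < κ := by linarith
  set ρ : ℝ := (κ - 1) / (κ + 1)
  have hρ₀ : 0 ≤ ρ := div_nonneg (by linarith) (by linarith)
  have hρ₁ : ρ ≤ 1 := (div_le_one (by positivity)).mpr (by linarith)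
  obtain ⟨f, hf₀, hnorm, hgram⟩ := exists_energyNorm_eq_pow_mul hA e hρ₀ hρ₁ hK
  refine ⟨f, fun k => (((κ + 1) / (2 * κ) : ℝ) : 𝕜) • (f k - f (k + 1)), hf₀, hnorm, ?_, ?_, ?_⟩
  · intro k hk
    refine isExtremalStep_smul_sub hA hκ₀ (hgram k (k + 1) k.le_succ hk) ?_
    rw [hnorm (k + 1) hk, hnorm k hk.le, pow_succ', mul_assoc]
  · intro k
    rw [smul_smul, ← RCLike.ofReal_mul, div_mul_div_cancel₀' (by positivity),
      div_self (by positivity), RCLike.ofReal_one, one_smul, sub_sub_cancel]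
  · intro k hk l hl
    have horth : energyInner A (f l - f (l + 1)) (f k - f (k + 1)) = 0 := by
      rw [energyInner_sub_left, energyInner_sub_right, energyInner_sub_right,
        hgram l k hl.le hk.le, hgram l (k + 1) (by omega) hk, hgram (l + 1) k hl hk.le,
        hgram (l + 1) (k + 1) (by omega) hk, sub_self]
    rw [energyInner_smul_left, energyInner_smul_right, ← star_energyInner hA, horth, star_zero,
      mul_zero, mul_zero]

end ExtremalStep

theorem pcg_bound_sharp_complex_general [DecidableEq ι] (A : Matrix ι ι 𝕜) (hA : A.PosDef)
    (b x₀ : ι → 𝕜) (hx₀ : x₀ ≠ A⁻¹ *ᵥ b) (κ : ℝ) (hκ : 1 < κ) (K : ℕ)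
    (hK : K < Fintype.card ι) :
    ∃ B : ℕ → Matrix ι ι 𝕜, (∀ k, (B k).PosDef) ∧ (∀ k < K, CondLE A (B k) κ) ∧
      ∀ S : ℕ → Finset ℕ, (∀ k, ∀ l ∈ S k, l < k) →
      ∀ x r s p : ℕ → ι → 𝕜, x 0 = x₀ → IsTruncatedPCG A B b S x r s p →
      ∀ k < K, p k = s k ∧
        energyNorm A (A⁻¹ *ᵥ b - x (k + 1)) / energyNorm A (A⁻¹ *ᵥ b - x k) =
          (κ - 1) / (κ + 1) := by
  have hρ : 0 < (κ - 1) / (κ + 1) := div_pos (by linarith) (by linarith)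
  have he : 0 < energyNorm A (A⁻¹ *ᵥ b - x₀) := energyNorm_pos hA (sub_ne_zero.mpr hx₀.symm)
  obtain ⟨f, v, hf₀, hnorm, hstep, hf, hv⟩ :=
    exists_isExtremalStep_sequence hA hκ (A⁻¹ *ᵥ b - x₀) hK
  have hpos (k : ℕ) (hk : k ≤ K) : 0 < energyNorm A (f k) := by
    rw [hnorm k hk]
    exact mul_pos (pow_pos hρ k) he
  have hne (k : ℕ) (hk : k < K) : f k ≠ 0 := fun h =>
    (hpos k hk.le).ne' (by simp [h, energyNorm, energyInner])
  have hB (k : ℕ) : ∃ B : Matrix ι ι 𝕜, B.PosDef ∧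
      (k < K → CondLE A B κ ∧ B *ᵥ v k = A *ᵥ f k) := by
    by_cases hk : k < K
    · obtain ⟨B, hB, hBv⟩ := (hstep k hk).exists_preconditioner hA hκ (hne k hk)
      exact ⟨B, hB, fun _ => hBv⟩
    · exact ⟨A, hA, fun h => absurd h hk⟩
  choose B hB hBv using hB
  refine ⟨B, hB, fun k hk => (hBv k hk).1, fun S hS x r s p hx hpcg k hk => ?_⟩
  obtain ⟨herr, hdir⟩ := hpcg.eq_steepestDescent hA.isUnit (fun k => (hB k).isUnit) hS
    (hx ▸ hf₀) (fun k hk => (hBv k hk).2)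
    (fun k hk => by rw [(hstep k hk).stepLength hA (by linarith) (hne k hk), hf]) hv
  refine ⟨(hdir k hk).2.trans (hdir k hk).1.symm, ?_⟩
  rw [herr (k + 1) hk, herr k hk.le, hnorm (k + 1) hk, pow_succ', mul_assoc, ← hnorm k hk.le,
    mul_div_cancel_right₀ _ (hpos k hk.le).ne']

/-- The convergence rate bound is sharp in the complex Hermitian case:
for any Hermitian positive definite `A`, `b`, `x 0 ≠ x* = A⁻¹ b`, `κmax > 1`, and number of
iterations `K < n`, there exist Hermitian positive definite preconditioners
`B 0, …, B (K−1)`, each with `κ(B_k⁻¹ A) ≤ κmax`, such that for every admissible choice of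
`m` the method turns into the preconditioned steepest descent method (`p k = s k`) and
`‖e (k+1)‖_A / ‖e k‖_A = (κmax − 1)/(κmax + 1)` for every `k < K`. -/
theorem pcg_bound_sharp_complex
    {n : ℕ} (A : Matrix (Fin n) (Fin n) ℂ) (hA : A.PosDef)
    (b x0 : Fin n → ℂ) (hx0 : x0 ≠ A⁻¹ *ᵥ b)
    (κmax : ℝ) (hκ : 1 < κmax) (K : ℕ) (hK : K < n) :
    ∃ B : ℕ → Matrix (Fin n) (Fin n) ℂ,
      (∀ k, (B k).PosDef) ∧
      (∀ k < K, ∃ a c : ℝ, 0 < a ∧ a ≤ c ∧ c / a ≤ κmax ∧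
        (∀ u : Fin n → ℂ, a * (star (B k *ᵥ u) ⬝ᵥ u).re ≤ (star (A *ᵥ u) ⬝ᵥ u).re) ∧
        (∀ u : Fin n → ℂ, (star (A *ᵥ u) ⬝ᵥ u).re ≤ c * (star (B k *ᵥ u) ⬝ᵥ u).re)) ∧
      ∀ m : ℕ → ℕ, m 0 = 0 → (∀ k, m k ≤ k) → (∀ k, m (k + 1) ≤ m k + 1) →
      ∀ x r s p e : ℕ → Fin n → ℂ,
        x 0 = x0 →
        (∀ k, r k = b - A *ᵥ x k) →
        (∀ k, s k = (B k)⁻¹ *ᵥ r k) →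
        (∀ k, p k = s k - ∑ l ∈ Finset.Ico (k - m k) k,
            ((star (A *ᵥ s k) ⬝ᵥ p l) / (star (A *ᵥ p l) ⬝ᵥ p l)) • p l) →
        (∀ k, x (k + 1) = x k + ((star (r k) ⬝ᵥ p k) / (star (A *ᵥ p k) ⬝ᵥ p k)) • p k) →
        (∀ k, e k = A⁻¹ *ᵥ b - x k) →
        ∀ k < K, p k = s k ∧
          anormC A (e (k + 1)) / anormC A (e k) = (κmax - 1) / (κmax + 1) := by
  obtain ⟨B, hB, hcond, hrun⟩ := pcg_bound_sharp_complex_general A hA b x0 hx0 κmax hκ K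
    (hK.trans_eq (Fintype.card_fin n).symm)
  refine ⟨B, hB, hcond, fun m _ _ _ x r s p e hx hr hs hp hxs he => ?_⟩
  obtain rfl : e = fun k => A⁻¹ *ᵥ b - x k := funext he
  exact hrun (fun k => Finset.Ico (k - m k) k) (fun k l hl => (Finset.mem_Ico.mp hl).2)
    x r s p hx ⟨hr, hs, hp, hxs⟩
end
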